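/- arXiv:2603.26038 — 3 statements merged into one kernel-verified Lean document; each statement's English description precedes it below -/
import Mathlib

section
/- There exist R* > 0, c* > 0 and a continuously differentiable function θ* : ℝ → ℝ with the following properties: θ* is strictly increasing on ℝ; θ*(0) = θ_ig and θ*(R*) = θ_hl; θ* is twice continuously differentiable on each of (−∞,0), (0,R*), (R*,+∞) and satisfies θ*'' − c*·θ*' = 0 on (−∞,0), θ*'' − c*·θ*' + q = 0 on (0,R*), and θ*'' − c*·θ*' + q − h((1+θ*)⁴ − 1) = 0 on (R*,+∞); θ*(x) → 0 as x → −∞ and θ*(x) → θ₊ as x → +∞. Moreover the pair (R*, c*) is unique, and θ* is the unique such profile normalized by θ*(0) = θ_ig (i.e. unique up to translation). -/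
open Set Filter

/-- The free-interface traveling-front conditions: `θ` is a globally `C¹`, strictly
increasing profile with ignition interface at `0`, heat-loss interface at `R`,
which is `C²` and satisfies the appropriate ODE on each of the three regions,
and has the prescribed limits at `±∞`. -/
def IsAutoignitionFront (q h θig θhl θp : ℝ) (R c : ℝ) (θ : ℝ → ℝ) : Prop :=
  ContDiff ℝ 1 θ ∧
  StrictMono θ ∧
  θ 0 = θig ∧
  θ R = θhl ∧
  ContDiffOn ℝ 2 θ (Iio 0) ∧
  ContDiffOn ℝ 2 θ (Ioo 0 R) ∧
  ContDiffOn ℝ 2 θ (Ioi R) ∧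
  (∀ x ∈ Iio (0 : ℝ), deriv (deriv θ) x - c * deriv θ x = 0) ∧
  (∀ x ∈ Ioo (0 : ℝ) R, deriv (deriv θ) x - c * deriv θ x + q = 0) ∧
  (∀ x ∈ Ioi R, deriv (deriv θ) x - c * deriv θ x + q - h * ((1 + θ x) ^ 4 - 1) = 0) ∧
  Tendsto θ atBot (nhds 0) ∧
  Tendsto θ atTop (nhds θp)

/-!
Existence is by shooting. For `x ≤ R` the front is explicit, and the burning zone meets the
heat-loss temperature `b` exactly when its speed is a certain function of `r = c R`; the slope
with which it arrives there is then a function of `r` too. Beyond `R` the equation is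
`θ'' = c θ' + g θ`, where `g`, extended to all temperatures, has the sign of `θ - e`, so that
`(e, 0)` is a saddle of the phase plane. Along its curves `exp (-c x) (θ - e) θ'` is strictly
increasing, so no curve both passes above `e` with positive slope and turns back below `e`. Both
events are open in `r`. The first occurs for `r` near `log (b / a)`, where `c θ'(R)` blows up, and
the second for `r = b / a`, where `θ'(R) < 0`. By connectedness some `r` avoids both; its curve is
trapped and converges to `e`.

For uniqueness, view the slope as a function of the temperature. With speeds `c < c'` the second
slope starts above the first by `(c' - c) a`, and the gap can never shrink below this, so the
second profile would be unbounded. Once the speeds agree, the profiles agree for `x ≤ R` by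
linearity, and afterwards by uniqueness for the Lipschitz Cauchy problem.
-/

section IntegralCurves

variable {E : Type*} [NormedAddCommGroup E] [NormedSpace ℝ E]

theorem hasDerivAt_ite_le {f g f' g' : ℝ → E} {a x : ℝ}
    (hf : x ≤ a → HasDerivAt f (f' x) x) (hg : a ≤ x → HasDerivAt g (g' x) x)
    (h : f a = g a) (h' : f' a = g' a) :
    HasDerivAt (fun y => if y ≤ a then f y else g y) (if x ≤ a then f' x else g' x) x := by
  rcases lt_trichotomy x a with hx | rfl | hx
  · rw [if_pos hx.le]
    refine (hf hx.le).congr_of_eventuallyEq ?_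
    filter_upwards [Iio_mem_nhds hx] with y hy using if_pos (le_of_lt hy)
  · have hleft : HasDerivWithinAt (fun y => if y ≤ x then f y else g y) (f' x) (Iic x) x :=
      (hf le_rfl).hasDerivWithinAt.congr (fun y hy => if_pos hy) (if_pos le_rfl)
    have hright : HasDerivWithinAt (fun y => if y ≤ x then f y else g y) (f' x) (Ici x) x := by
      rw [h']
      refine (hg le_rfl).hasDerivWithinAt.congr_of_mem (fun y hy => ?_) self_mem_Ici
      rcases eq_or_lt_of_le (mem_Ici.1 hy) with rfl | hxy
      · rw [if_pos le_rfl, h]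
      · exact if_neg hxy.not_ge
    rw [if_pos le_rfl, ← hasDerivWithinAt_univ, ← Iic_union_Ici (a := x)]
    exact hleft.union hright
  · rw [if_neg hx.not_ge]
    refine (hg hx.le).congr_of_eventuallyEq ?_
    filter_upwards [Ioi_mem_nhds hx] with y hy using if_neg (not_le.2 hy)

-- Solutions restarted at `-T / 2` and `T / 2` prolong the given one by `T / 2` on either side.
theorem exists_hasDerivAt_Ioo_extend {V : E → E} {T : ℝ} (hT : 0 < T)
    (h : ∀ x, ∃ γ : ℝ → E, γ 0 = x ∧ ∀ t ∈ Ioo (-T) T, HasDerivAt γ (V (γ t)) t) (x : E) :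
    ∃ γ : ℝ → E, γ 0 = x ∧ ∀ t ∈ Ioo (-(3 / 2 * T)) (3 / 2 * T), HasDerivAt γ (V (γ t)) t := by
  obtain ⟨γ, hγ0, hγ⟩ := h x
  obtain ⟨α, hα0, hα⟩ := h (γ (-T / 2))
  obtain ⟨β, hβ0, hβ⟩ := h (γ (T / 2))
  let η : ℝ → E := fun t => if t ≤ T / 2 then γ t else β (t - T / 2)
  have hη : ∀ t ∈ Ioo (-T) (3 / 2 * T), HasDerivAt η (V (η t)) t := fun t ht => by
    have hglue := hasDerivAt_ite_le (a := T / 2) (x := t) (f' := fun s => V (γ s))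
      (g' := fun s => V (β (s - T / 2))) (fun hle => hγ t ⟨ht.1, by linarith⟩)
      (fun hge => (hβ (t - T / 2) ⟨by linarith, by linarith [ht.2]⟩).comp_sub_const _ _)
      (by rw [sub_self, hβ0]) (by rw [sub_self, hβ0])
    rwa [← apply_ite V] at hglue
  refine ⟨fun t => if t ≤ -T / 2 then α (t - -T / 2) else η t, ?_, fun t ht => ?_⟩
  · exact (if_neg (by linarith)).trans ((if_pos (by linarith)).trans hγ0)
  · have hjoin : α (-T / 2 - -T / 2) = η (-T / 2) := by
      rw [sub_self, hα0]
      exact (if_pos (by linarith)).symm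
    have hglue := hasDerivAt_ite_le (a := -T / 2) (x := t) (g := η)
      (f' := fun s => V (α (s - -T / 2))) (g' := fun s => V (η s))
      (fun hle => (hα (t - -T / 2) ⟨by linarith [ht.1], by linarith⟩).comp_sub_const _ _)
      (fun hge => hη t ⟨by linarith, ht.2⟩) hjoin (congrArg V hjoin)
    rwa [← apply_ite V] at hglue

theorem exists_isIntegralCurve_of_forall_Ioo {V : E → E} {K : NNReal} (hV : LipschitzWith K V)
    {x : E}
    (h : ∀ n : ℕ, ∃ γ : ℝ → E, γ 0 = x ∧
      ∀ t ∈ Ioo (-((n : ℝ) + 1)) (n + 1), HasDerivAt γ (V (γ t)) t) :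
    ∃ γ : ℝ → E, γ 0 = x ∧ IsIntegralCurve γ fun _ => V := by
  choose α h0 hα using h
  have hagree : ∀ n m : ℕ, n ≤ m → EqOn (α n) (α m) (Ioo (-((n : ℝ) + 1)) (n + 1)) := by
    intro n m hnm
    have hnm' : (n : ℝ) ≤ m := Nat.cast_le.2 hnm
    exact ODE_solution_unique_of_mem_Ioo (v := fun _ => V) (s := fun _ => univ) (t₀ := 0)
      (fun t _ => hV.lipschitzOnWith) (by constructor <;> linarith [n.cast_nonneg (α := ℝ)])
      (fun t ht => ⟨hα n t ht, mem_univ _⟩)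
      (fun t ht => ⟨hα m t ⟨by linarith [ht.1], by linarith [ht.2]⟩, mem_univ _⟩)
      (by rw [h0, h0])
  have hmem : ∀ t : ℝ, t ∈ Ioo (-((⌈|t|⌉₊ : ℝ) + 1)) (⌈|t|⌉₊ + 1) := fun t =>
    abs_lt.1 ((Nat.le_ceil |t|).trans_lt (lt_add_one _))
  refine ⟨fun t => α ⌈|t|⌉₊ t, h0 _, fun t => ?_⟩
  refine (hα ⌈|t|⌉₊ t (hmem t)).congr_of_eventuallyEq ?_
  filter_upwards [Ioo_mem_nhds (hmem t).1 (hmem t).2] with s hs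
  rcases le_total ⌈|s|⌉₊ ⌈|t|⌉₊ with hle | hle
  · exact hagree _ _ hle (hmem s)
  · exact (hagree _ _ hle hs).symm

theorem exists_hasDerivAt_Ioo_of_lipschitzWith [CompleteSpace E] {V : E → E} {K : NNReal}
    (hV : LipschitzWith K V) (x : E) :
    ∃ γ : ℝ → E, γ 0 = x ∧
      ∀ t ∈ Ioo (-(K + 1 : ℝ)⁻¹) (K + 1 : ℝ)⁻¹, HasDerivAt γ (V (γ t)) t := by
  have hδ : (0 : ℝ) ≤ (K + 1 : ℝ)⁻¹ := by positivity
  have hPL : IsPicardLindelof (fun _ => V) (tmin := -(K + 1 : ℝ)⁻¹) (tmax := (K + 1 : ℝ)⁻¹)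
      ⟨0, neg_nonpos.2 hδ, hδ⟩ x ‖V x‖₊ 0 (‖V x‖₊ + K * ‖V x‖₊) K := by
    refine .of_time_independent (fun y hy => ?_) hV.lipschitzOnWith ?_
    · calc ‖V y‖ ≤ ‖V x‖ + ‖V y - V x‖ := norm_le_insert' _ _
        _ ≤ ‖V x‖ + K * ‖V x‖ := by
          gcongr
          exact (hV.norm_sub_le y x).trans
            (mul_le_mul_of_nonneg_left (mem_closedBall_iff_norm.1 hy) K.2)
    · simp only [NNReal.coe_add, NNReal.coe_mul, coe_nnnorm, sub_zero, zero_sub, neg_neg,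
        max_self, NNReal.coe_zero]
      exact le_of_eq (by field_simp; ring)
  obtain ⟨γ, hγ0, hγ⟩ := hPL.exists_eq_forall_mem_Icc_hasDerivWithinAt₀
  exact ⟨γ, hγ0, fun t ht => (hγ t (Ioo_subset_Icc_self ht)).hasDerivAt (Icc_mem_nhds ht.1 ht.2)⟩

theorem exists_isIntegralCurve_of_lipschitzWith [CompleteSpace E] {V : E → E} {K : NNReal}
    (hV : LipschitzWith K V) (x : E) :
    ∃ γ : ℝ → E, γ 0 = x ∧ IsIntegralCurve γ fun _ => V := by
  let δ : ℝ := (K + 1 : ℝ)⁻¹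
  have hδ : 0 < δ := by positivity
  have hextend : ∀ (n : ℕ) (x : E), ∃ γ : ℝ → E, γ 0 = x ∧
      ∀ t ∈ Ioo (-((3 / 2) ^ n * δ)) ((3 / 2) ^ n * δ), HasDerivAt γ (V (γ t)) t := by
    intro n
    induction n with
    | zero => simpa only [pow_zero, one_mul] using exists_hasDerivAt_Ioo_of_lipschitzWith hV
    | succ n ih =>
      intro x
      simpa only [pow_succ', mul_assoc] using exists_hasDerivAt_Ioo_extend (by positivity) ih x
  refine exists_isIntegralCurve_of_forall_Ioo hV fun n => ?_
  obtain ⟨m, hm⟩ := pow_unbounded_of_one_lt ((n + 1) / δ) (by norm_num : (1 : ℝ) < 3 / 2)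
  obtain ⟨γ, hγ0, hγ⟩ := hextend m x
  rw [div_lt_iff₀ hδ] at hm
  exact ⟨γ, hγ0, fun t ht => hγ t ⟨by linarith [ht.1], by linarith [ht.2]⟩⟩

theorem continuous_apply_of_isIntegralCurve {X : Type*} [TopologicalSpace X] {V : X → E → E}
    {K : NNReal} (hV : ∀ x, LipschitzWith K (V x)) (hVc : Continuous fun z : X × E => V z.1 z.2)
    {Φ : X → ℝ → E} (h0 : Continuous fun x => Φ x 0)
    (hΦ : ∀ x, IsIntegralCurve (Φ x) fun _ => V x) {T : ℝ} (hT : 0 ≤ T) :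
    Continuous fun x => Φ x T := by
  refine continuous_iff_continuousAt.2 fun x₀ => Metric.tendsto_nhds.2 fun ε hε => ?_
  have hbound : Continuous fun η => gronwallBound η K η T := by
    unfold gronwallBound
    split_ifs <;> fun_prop
  obtain ⟨η, hη, hηpos⟩ : ∃ η, gronwallBound η K η T < ε ∧ 0 < η := by
    have hlim := hbound.tendsto 0
    rw [gronwallBound_ε0_δ0] at hlim
    exact (((hlim.mono_left nhdsWithin_le_nhds).eventually_lt_const hε).and
      (self_mem_nhdsWithin (s := Ioi (0 : ℝ)))).exists
  have hfield : ∀ᶠ x in nhds x₀, ∀ t ∈ Icc 0 T, dist (V x₀ (Φ x₀ t)) (V x (Φ x₀ t)) < η := by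
    refine isCompact_Icc.eventually_forall_of_forall_eventually fun t _ => ?_
    have hpath : Continuous fun z : X × ℝ => Φ x₀ z.2 := (hΦ x₀).continuous.comp continuous_snd
    have hdist : Continuous fun z : X × ℝ => dist (V x₀ (Φ x₀ z.2)) (V z.1 (Φ x₀ z.2)) :=
      ((hVc.comp (continuous_const.prodMk hpath)).dist (hVc.comp (continuous_fst.prodMk hpath)))
    exact hdist.continuousAt.eventually_lt_const ((dist_self _).trans_lt hηpos)
  have hstart : ∀ᶠ x in nhds x₀, dist (Φ x 0) (Φ x₀ 0) < η :=
    Metric.tendsto_nhds.1 h0.continuousAt η hηpos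
  filter_upwards [hfield, hstart] with x hx hx0
  have := dist_le_of_approx_trajectories_ODE (v := fun _ => V x) (fun _ => hV x)
    (hΦ x).continuous.continuousOn (fun t _ => (hΦ x t).hasDerivWithinAt)
    (fun _ _ => (dist_self _).le) (hΦ x₀).continuous.continuousOn
    (fun t _ => (hΦ x₀ t).hasDerivWithinAt)
    (fun t ht => (hx t (Ico_subset_Icc_self ht)).le) hx0.le T (right_mem_Icc.2 hT)
  rw [zero_add, sub_zero] at this
  exact this.trans_lt hη

end IntegralCurves

section Growth

variable {f f' : ℝ → ℝ} {a δ : ℝ}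

theorem add_mul_le_of_le_deriv (hf : ∀ x, a ≤ x → HasDerivAt f (f' x) x)
    (h : ∀ x, a ≤ x → δ ≤ f' x) {x : ℝ} (hx : a ≤ x) : f a + δ * (x - a) ≤ f x := by
  have := (convex_Ici a).mul_sub_le_image_sub_of_le_deriv (f := f) (C := δ)
    (fun y hy => (hf y hy).continuousAt.continuousWithinAt)
    (fun y hy => (hf y (interior_subset hy)).differentiableAt.differentiableWithinAt)
    (fun y hy => by rw [(hf y (interior_subset hy)).deriv]; exact h y (interior_subset hy))
    a self_mem_Ici x hx hx
  linarith

theorem tendsto_atTop_of_le_deriv (hδ : 0 < δ) (hf : ∀ x, a ≤ x → HasDerivAt f (f' x) x)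
    (h : ∀ x, a ≤ x → δ ≤ f' x) : Tendsto f atTop atTop := by
  have hline : Tendsto (fun x => f a + δ * (x - a)) atTop atTop :=
    tendsto_atTop_add_const_left _ _
      ((tendsto_atTop_add_const_right _ (-a) tendsto_id).const_mul_atTop hδ)
  refine tendsto_atTop_mono' _ ?_ hline
  filter_upwards [eventually_ge_atTop a] with x hx using add_mul_le_of_le_deriv hf h hx

end Growth

section Saddle

/-- The planar field `(v, p) ↦ (p, κ p + g v)`, i.e. the equation `v'' = κ v' + g v` in the phase
plane. -/
def phaseField (g : ℝ → ℝ) (κ : ℝ) (z : ℝ × ℝ) : ℝ × ℝ :=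
  (z.2, κ * z.2 + g z.1)

variable {g : ℝ → ℝ} {K : NNReal} {κ e : ℝ} {γ : ℝ → ℝ × ℝ}

theorem lipschitzOnWith_phaseField {s : Set ℝ} (hg : LipschitzOnWith K g s) {C : NNReal}
    (hκ : |κ| ≤ C) : LipschitzOnWith (1 + C + K) (phaseField g κ) (s ×ˢ univ) := by
  refine LipschitzOnWith.of_dist_le_mul fun y hy z hz => ?_
  have h1 : dist y.1 z.1 ≤ dist y z := le_max_left _ _
  have h2 : dist y.2 z.2 ≤ dist y z := le_max_right _ _
  have hC : |κ| * dist y.2 z.2 ≤ C * dist y z := by gcongr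
  have hK : dist (g y.1) (g z.1) ≤ K * dist y z :=
    (hg.dist_le_mul _ hy.1 _ hz.1).trans (mul_le_mul_of_nonneg_left h1 K.2)
  have hCK : 0 ≤ C * dist y z ∧ 0 ≤ K * dist y z := by constructor <;> positivity
  have hsum : dist (κ * y.2 + g y.1) (κ * z.2 + g z.1) ≤
      |κ| * dist y.2 z.2 + dist (g y.1) (g z.1) := by
    refine (dist_add_add_le _ _ _ _).trans_eq ?_
    rw [Real.dist_eq (κ * y.2), ← mul_sub, abs_mul, ← Real.dist_eq]
  push_cast
  rw [add_mul, add_mul, one_mul]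
  refine max_le ?_ ?_
  · change dist y.2 z.2 ≤ _
    linarith
  · change dist (κ * y.2 + g y.1) (κ * z.2 + g z.1) ≤ _
    linarith [dist_nonneg (x := y) (y := z)]

theorem lipschitzWith_phaseField (hg : LipschitzWith K g) {C : NNReal} (hκ : |κ| ≤ C) :
    LipschitzWith (1 + C + K) (phaseField g κ) := by
  simpa only [univ_prod_univ, lipschitzOnWith_univ] using
    lipschitzOnWith_phaseField (hg.lipschitzOnWith (s := univ)) hκ

theorem hasDerivAt_fst_of_phaseField (hγ : IsIntegralCurve γ fun _ => phaseField g κ) (t : ℝ) :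
    HasDerivAt (fun t => (γ t).1) (γ t).2 t :=
  (hγ t).fst

theorem hasDerivAt_snd_of_phaseField (hγ : IsIntegralCurve γ fun _ => phaseField g κ) (t : ℝ) :
    HasDerivAt (fun t => (γ t).2) (κ * (γ t).2 + g (γ t).1) t :=
  (hγ t).snd

theorem ne_equilibrium_of_phaseField (hg : LipschitzWith K g) (hge : g e = 0)
    (hγ : IsIntegralCurve γ fun _ => phaseField g κ) (h0 : γ 0 ≠ (e, 0)) (t : ℝ) :
    γ t ≠ (e, 0) := by
  intro ht
  have hconst : IsIntegralCurve (fun _ => ((e, 0) : ℝ × ℝ)) fun _ => phaseField g κ :=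
    isIntegralCurve_const fun _ => by simp [phaseField, hge]
  have := ODE_solution_unique_univ (v := fun _ => phaseField g κ) (s := fun _ => univ) (t₀ := t)
    (fun _ => (lipschitzWith_phaseField hg (C := ‖κ‖₊) le_rfl).lipschitzOnWith)
    (fun s => ⟨hγ s, mem_univ _⟩) (fun s => ⟨hconst s, mem_univ _⟩) ht
  exact h0 (congrFun this 0)

theorem strictMono_exp_mul_sub_mul (hg : ∀ y ≠ e, 0 < (y - e) * g y)
    (hγ : IsIntegralCurve γ fun _ => phaseField g κ) (hne : ∀ t, γ t ≠ (e, 0)) :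
    StrictMono fun t => Real.exp (-κ * t) * (((γ t).1 - e) * (γ t).2) := by
  have hderiv : ∀ t, HasDerivAt (fun t => Real.exp (-κ * t) * (((γ t).1 - e) * (γ t).2))
      (Real.exp (-κ * t) * ((γ t).2 ^ 2 + ((γ t).1 - e) * g (γ t).1)) t := fun t =>
    (((hasDerivAt_id' t).const_mul (-κ)).exp.mul
      (((hasDerivAt_fst_of_phaseField hγ t).sub_const e).mul
        (hasDerivAt_snd_of_phaseField hγ t))).congr_deriv (by simp only [Pi.mul_apply]; ring)
  refine strictMono_of_deriv_pos fun t => ?_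
  rw [(hderiv t).deriv]
  refine mul_pos (Real.exp_pos _) ?_
  by_cases hv : (γ t).1 = e
  · have hp : (γ t).2 ≠ 0 := fun hp => hne t (Prod.ext hv hp)
    rw [hv, sub_self, zero_mul, add_zero]
    positivity
  · exact add_pos_of_nonneg_of_pos (sq_nonneg _) (hg _ hv)

theorem not_turn_back_of_overshoot (hg : ∀ y ≠ e, 0 < (y - e) * g y)
    (hγ : IsIntegralCurve γ fun _ => phaseField g κ) (hne : ∀ t, γ t ≠ (e, 0)) {t s : ℝ}
    (ht : e < (γ t).1 ∧ 0 < (γ t).2) : ¬((γ s).1 < e ∧ (γ s).2 < 0) := by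
  intro hs
  have hmono := (strictMono_exp_mul_sub_mul hg hγ hne).monotone
  obtain ⟨r, hr, hr0⟩ := intermediate_value_uIcc (a := t) (b := s) (f := fun t => (γ t).2)
    hγ.continuous.snd.continuousOn (mem_uIcc.2 (Or.inr ⟨hs.2.le, ht.2.le⟩))
  have hpos : 0 < Real.exp (-κ * min t s) * (((γ (min t s)).1 - e) * (γ (min t s)).2) := by
    refine mul_pos (Real.exp_pos _) ?_
    rcases min_choice t s with h | h <;> rw [h]
    · exact mul_pos (sub_pos.2 ht.1) ht.2
    · exact mul_pos_of_neg_of_neg (sub_neg.2 hs.1) hs.2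
  have := hpos.trans_le (hmono hr.1)
  simp only [hr0, mul_zero, lt_self_iff_false] at this

theorem trapped_of_forall_not_exit (hg : ∀ y ≠ e, 0 < (y - e) * g y)
    (hγ : IsIntegralCurve γ fun _ => phaseField g κ) (hne : ∀ t, γ t ≠ (e, 0)) (h0 : (γ 0).1 < e)
    (hright : ∀ t, 0 ≤ t → ¬(e < (γ t).1 ∧ 0 < (γ t).2))
    (hleft : ∀ t, 0 ≤ t → ¬((γ t).1 < e ∧ (γ t).2 < 0)) (t : ℝ) (ht : 0 ≤ t) :
    (γ t).1 < e ∧ 0 < (γ t).2 := by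
  have hnonpos : ∀ t, 0 ≤ t → ((γ t).1 - e) * (γ t).2 ≤ 0 := fun t ht => by
    by_contra! hpos
    rcases mul_pos_iff.1 hpos with h | h
    · exact hright t ht ⟨sub_pos.1 h.1, h.2⟩
    · exact hleft t ht ⟨sub_neg.1 h.1, h.2⟩
  have hneg : ∀ t, 0 ≤ t → ((γ t).1 - e) * (γ t).2 < 0 := fun t ht => by
    have hlt := strictMono_exp_mul_sub_mul hg hγ hne (lt_add_one t)
    have hlater := mul_nonpos_of_nonneg_of_nonpos (Real.exp_pos (-κ * (t + 1))).le
      (hnonpos (t + 1) (by linarith))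
    exact neg_of_mul_neg_right (hlt.trans_le hlater) (Real.exp_pos _).le
  have hv : (γ t).1 < e := by
    by_contra! hge
    obtain ⟨s, hs, hse⟩ : ∃ s ∈ Icc 0 t, (γ s).1 = e :=
      intermediate_value_Icc ht hγ.continuous.fst.continuousOn ⟨h0.le, hge⟩
    have := hneg s hs.1
    rw [hse, sub_self, zero_mul] at this
    exact this.false
  exact ⟨hv, pos_of_mul_neg_right (hneg t ht) (sub_neg.2 hv).le⟩

theorem exists_exit_right {p₀ : ℝ} (hp₀ : 0 < p₀) (hg : ∀ y, -(κ * p₀) ≤ g y)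
    (hγ : IsIntegralCurve γ fun _ => phaseField g κ) (h0 : (γ 0).2 = p₀) :
    ∃ t, 0 ≤ t ∧ e < (γ t).1 ∧ 0 < (γ t).2 := by
  have hderiv : ∀ t, HasDerivAt (fun t => Real.exp (-κ * t) * ((γ t).2 - p₀))
      (Real.exp (-κ * t) * (g (γ t).1 + κ * p₀)) t := fun t =>
    (((hasDerivAt_id' t).const_mul (-κ)).exp.mul
      ((hasDerivAt_snd_of_phaseField hγ t).sub_const p₀)).congr_deriv (by ring)
  have hslope : ∀ t, 0 ≤ t → p₀ ≤ (γ t).2 := fun t ht => by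
    have hle := add_mul_le_of_le_deriv (δ := 0) (a := 0) (fun t _ => hderiv t)
      (fun t _ => mul_nonneg (Real.exp_pos _).le (by linarith [hg (γ t).1])) ht
    rw [h0, sub_self, mul_zero, zero_mul, zero_add] at hle
    exact sub_nonneg.1 (nonneg_of_mul_nonneg_right hle (Real.exp_pos _))
  have hv := tendsto_atTop_of_le_deriv hp₀ (fun t _ => hasDerivAt_fst_of_phaseField hγ t) hslope
  obtain ⟨t, ht, hte⟩ := ((eventually_ge_atTop 0).and (hv.eventually_gt_atTop e)).exists
  exact ⟨t, ht, hte, hp₀.trans_le (hslope t ht)⟩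

theorem tendsto_of_trapped (hgc : Continuous g) (hg : ∀ y ≠ e, 0 < (y - e) * g y) (hκ : 0 ≤ κ)
    (hγ : IsIntegralCurve γ fun _ => phaseField g κ)
    (htrap : ∀ t, 0 ≤ t → (γ t).1 < e ∧ 0 < (γ t).2) :
    Tendsto (fun t => (γ t).1) atTop (nhds e) := by
  have hmono : ∀ s t, 0 ≤ s → s ≤ t → (γ s).1 ≤ (γ t).1 := fun s t hs hst => by
    have := add_mul_le_of_le_deriv (δ := 0) (fun t _ => hasDerivAt_fst_of_phaseField hγ t)
      (fun t ht => (htrap t (hs.trans ht)).2.le) hst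
    linarith
  suffices hreach : ∀ l < e, ∃ t, 0 ≤ t ∧ l < (γ t).1 by
    refine tendsto_order.2 ⟨fun l hl => ?_, fun u hu => ?_⟩
    · obtain ⟨s, hs, hls⟩ := hreach l hl
      filter_upwards [eventually_ge_atTop s] with t hst using hls.trans_le (hmono s t hs hst)
    · filter_upwards [eventually_ge_atTop 0] with t ht using (htrap t ht).1.trans hu
  intro l hl
  by_contra! hbound
  have hgneg : ∀ y ∈ Icc (γ 0).1 l, 0 < -g y := fun y hy => by
    have hye : y < e := hy.2.trans_lt hl
    exact neg_pos.2 (neg_of_mul_pos_right (hg y hye.ne) (sub_neg.2 hye).le)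
  obtain ⟨δ, hδ, hle⟩ := isCompact_Icc.exists_forall_le' hgc.neg.continuousOn hgneg
  have hderiv : ∀ t, HasDerivAt (fun t => κ * (γ t).1 - (γ t).2) (-g (γ t).1) t := fun t =>
    (((hasDerivAt_fst_of_phaseField hγ t).const_mul κ).sub
      (hasDerivAt_snd_of_phaseField hγ t)).congr_deriv (by ring)
  have hgrow := tendsto_atTop_of_le_deriv hδ (fun t _ => hderiv t)
    fun t (ht : 0 ≤ t) => hle _ ⟨hmono 0 t le_rfl ht, hbound t ht⟩
  obtain ⟨t, ht, hbig⟩ := ((eventually_ge_atTop 0).and (hgrow.eventually_gt_atTop (κ * e))).exists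
  linarith [(htrap t ht).2, mul_le_mul_of_nonneg_left (htrap t ht).1.le hκ]

theorem exists_continuous_curve_family {X : Type*} [TopologicalSpace X] [CompactSpace X]
    (hgl : LipschitzWith K g) {κ : X → ℝ} (hκ : Continuous κ) {z : X → ℝ × ℝ}
    (hz : Continuous z) :
    ∃ Φ : X → ℝ → ℝ × ℝ, (∀ x, Φ x 0 = z x) ∧
      (∀ x, IsIntegralCurve (Φ x) fun _ => phaseField g (κ x)) ∧
      ∀ t, 0 ≤ t → Continuous fun x => Φ x t := by
  obtain ⟨C, hC⟩ := isCompact_univ.exists_bound_of_continuousOn hκ.continuousOn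
  have hlip : ∀ x, LipschitzWith (1 + C.toNNReal + K) (phaseField g (κ x)) := fun x =>
    lipschitzWith_phaseField hgl ((hC x (mem_univ _)).trans (Real.le_coe_toNNReal C))
  have hjoint : Continuous fun z : X × ℝ × ℝ => phaseField g (κ z.1) z.2 := by
    have := hgl.continuous
    unfold phaseField
    fun_prop
  choose Φ hΦ0 hΦ using fun x => exists_isIntegralCurve_of_lipschitzWith (hlip x) (z x)
  exact ⟨Φ, hΦ0, hΦ, fun t ht =>
    continuous_apply_of_isIntegralCurve hlip hjoint (by simpa only [hΦ0]) hΦ ht⟩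

theorem exists_trapped_curve {X : Type*} [TopologicalSpace X] [CompactSpace X]
    [PreconnectedSpace X] {κ s : X → ℝ} (hκ : Continuous κ) (hs : Continuous s)
    (hgl : LipschitzWith K g) (hge : g e = 0) (hg : ∀ y ≠ e, 0 < (y - e) * g y) {b : ℝ}
    (hbe : b < e) {x₁ x₂ : X} (hpos : 0 < s x₁) (hover : ∀ y, -(κ x₁ * s x₁) ≤ g y)
    (hneg : s x₂ < 0) :
    ∃ x γ, γ 0 = (b, s x) ∧ IsIntegralCurve γ (fun _ => phaseField g (κ x)) ∧
      ∀ t, 0 ≤ t → (γ t).1 < e ∧ 0 < (γ t).2 := by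
  obtain ⟨Φ, hΦ0, hΦ, hΦt⟩ := exists_continuous_curve_family hgl hκ
      (continuous_const.prodMk hs : Continuous fun x => (b, s x))
  have hne : ∀ x t, Φ x t ≠ (e, 0) := fun x =>
    ne_equilibrium_of_phaseField hgl hge (hΦ x)
      (by rw [hΦ0]; exact fun h => hbe.ne (congrArg Prod.fst h))
  let right : Set X := ⋃ t ∈ Ici (0 : ℝ), {x | e < (Φ x t).1 ∧ 0 < (Φ x t).2}
  let left : Set X := ⋃ t ∈ Ici (0 : ℝ), {x | (Φ x t).1 < e ∧ (Φ x t).2 < 0}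
  have hright : IsOpen right := isOpen_biUnion fun t ht =>
    (isOpen_lt continuous_const (hΦt t ht).fst).inter (isOpen_lt continuous_const (hΦt t ht).snd)
  have hleft : IsOpen left := isOpen_biUnion fun t ht =>
    (isOpen_lt (hΦt t ht).fst continuous_const).inter (isOpen_lt (hΦt t ht).snd continuous_const)
  have hx₁ : x₁ ∈ right := by
    obtain ⟨t, ht, hexit⟩ := exists_exit_right (e := e) hpos hover (hΦ x₁) (by rw [hΦ0])
    exact mem_biUnion ht hexit
  have hx₂ : x₂ ∈ left := mem_biUnion (mem_Ici.2 le_rfl) (by simpa [hΦ0] using ⟨hbe, hneg⟩)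
  obtain ⟨x, hx⟩ : ∃ x, x ∉ right ∪ left := by
    by_contra! hcover
    obtain ⟨x, -, hxr, hxl⟩ := isPreconnected_univ right left hright hleft (fun x _ => hcover x)
      ⟨x₁, mem_univ _, hx₁⟩ ⟨x₂, mem_univ _, hx₂⟩
    obtain ⟨t, -, ht⟩ := mem_iUnion₂.1 hxr
    obtain ⟨r, -, hr⟩ := mem_iUnion₂.1 hxl
    exact not_turn_back_of_overshoot hg (hΦ x) (hne x) ht hr
  exact ⟨x, Φ x, hΦ0 x, hΦ x, trapped_of_forall_not_exit hg (hΦ x) (hne x)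
    (by rw [hΦ0]; exact hbe) (fun t ht h => hx (Or.inl (mem_biUnion ht h)))
    fun t ht h => hx (Or.inr (mem_biUnion ht h))⟩

end Saddle

section Shooting

variable {q a b e : ℝ}

theorem lipschitzOnWith_sub_const {f : ℝ → ℝ} {K : NNReal} {s : Set ℝ}
    (hf : LipschitzOnWith K f s) (d : ℝ) : LipschitzOnWith K (fun y => f y - d) s :=
  LipschitzOnWith.of_dist_le_mul fun x hx y hy =>
    (dist_sub_right _ _ d).trans_le (hf.dist_le_mul x hx y hy)

theorem exists_lipschitzWith_truncation {f : ℝ → ℝ} {K : NNReal} (hbe : b < e)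
    (hf : LipschitzOnWith K f (Icc b e)) (hneg : ∀ y ∈ Ico b e, f y < 0) (hfe : f e = 0) :
    ∃ (g : ℝ → ℝ) (M : ℝ), LipschitzWith (K + 1) g ∧ (∀ y ≠ e, 0 < (y - e) * g y) ∧
      (∀ y, -M ≤ g y) ∧ EqOn g f (Icc b e) := by
  obtain ⟨M, hM⟩ := isCompact_Icc.exists_bound_of_continuousOn hf.continuousOn
  have hlip : LipschitzWith (K + 1) fun y => f (projIcc b e hbe.le y) + max 0 (y - e) := by
    have h1 := hf.to_restrict.comp (LipschitzWith.projIcc hbe.le)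
    have h2 : LipschitzWith 1 fun y : ℝ => max 0 (y - e) :=
      (LipschitzWith.of_dist_le_mul fun x y => by
        rw [NNReal.coe_one, one_mul, dist_sub_right]).const_max 0
    rw [mul_one] at h1
    exact h1.add h2
  refine ⟨_, M, hlip, fun y hy => ?_, fun y => ?_, fun y hy => ?_⟩
  · rcases hy.lt_or_gt with hlt | hgt
    · rw [max_eq_left (sub_nonpos.2 hlt.le), add_zero]
      refine mul_pos_of_neg_of_neg (sub_neg.2 hlt) (hneg _ ⟨(projIcc b e hbe.le y).2.1, ?_⟩)
      exact (coe_projIcc b e hbe.le y).trans_lt (max_lt hbe (min_lt_of_right_lt hlt))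
    · rw [projIcc_of_right_le hbe.le hgt.le, hfe, zero_add, max_eq_right (sub_nonneg.2 hgt.le)]
      exact mul_pos (sub_pos.2 hgt) (sub_pos.2 hgt)
  · have := neg_le_of_abs_le (hM _ (projIcc b e hbe.le y).2)
    linarith [le_max_left 0 (y - e)]
  · simp only [projIcc_of_mem hbe.le hy, max_eq_left (sub_nonpos.2 hy.2), add_zero]

/-- The profile of the burning zone: the solution of `θ'' = c θ' - q` with `θ(0) = a` and
`θ'(0) = c a`. -/
noncomputable def burningProfile (q a c x : ℝ) : ℝ :=
  q / c ^ 2 + q / c * x + (a - q / c ^ 2) * Real.exp (c * x)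

/-- The speed for which `burningProfile` reaches the value `b` at the point `R` with `c R = r`.
Parametrizing by `r` makes this equation explicitly solvable for `c`. -/
noncomputable def burningSpeed (q a b r : ℝ) : ℝ :=
  √(q * (Real.exp r - 1 - r) / (a * Real.exp r - b))

/-- The slope `θ'(R) = c b - q R` of the burning-zone profile at its right end `R = r / c`. -/
noncomputable def burningSlope (q a b r : ℝ) : ℝ :=
  burningSpeed q a b r * b - q * (r / burningSpeed q a b r)

theorem burning_denom_pos (ha : 0 < a) (hab : a < b) {r : ℝ} (hr : Real.log (b / a) < r) :
    0 < a * Real.exp r - b := by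
  rw [Real.log_lt_iff_lt_exp (div_pos (ha.trans hab) ha), div_lt_iff₀' ha] at hr
  exact sub_pos.2 hr

theorem burning_numer_pos (hq : 0 < q) {r : ℝ} (hr : 0 < r) : 0 < q * (Real.exp r - 1 - r) :=
  mul_pos hq (by linarith [Real.add_one_lt_exp hr.ne'])

theorem burning_log_pos (ha : 0 < a) (hab : a < b) : 0 < Real.log (b / a) :=
  Real.log_pos ((one_lt_div ha).2 hab)

theorem burningSpeed_sq (hq : 0 < q) (ha : 0 < a) (hab : a < b) {r : ℝ}
    (hr : Real.log (b / a) < r) :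
    burningSpeed q a b r ^ 2 = q * (Real.exp r - 1 - r) / (a * Real.exp r - b) :=
  Real.sq_sqrt (div_pos (burning_numer_pos hq ((burning_log_pos ha hab).trans hr))
    (burning_denom_pos ha hab hr)).le

theorem burningSpeed_pos (hq : 0 < q) (ha : 0 < a) (hab : a < b) {r : ℝ}
    (hr : Real.log (b / a) < r) : 0 < burningSpeed q a b r :=
  Real.sqrt_pos.2 (div_pos (burning_numer_pos hq ((burning_log_pos ha hab).trans hr))
    (burning_denom_pos ha hab hr))

theorem burningSpeed_mul_burningSlope (hq : 0 < q) (ha : 0 < a) (hab : a < b) {r : ℝ}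
    (hr : Real.log (b / a) < r) :
    burningSpeed q a b r * burningSlope q a b r =
      q * (Real.exp r - 1 - r) / (a * Real.exp r - b) * b - q * r := by
  have hc := (burningSpeed_pos hq ha hab hr).ne'
  rw [← burningSpeed_sq hq ha hab hr, burningSlope]
  field_simp

theorem burningProfile_interface (hq : 0 < q) (ha : 0 < a) (hab : a < b) {r : ℝ}
    (hr : Real.log (b / a) < r) :
    burningProfile q a (burningSpeed q a b r) (r / burningSpeed q a b r) = b := by
  have hc := burningSpeed_pos hq ha hab hr
  have hsq := burningSpeed_sq hq ha hab hr
  rw [eq_div_iff (burning_denom_pos ha hab hr).ne'] at hsq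
  rw [burningProfile, mul_div_cancel₀ _ hc.ne']
  field_simp
  linear_combination hsq

theorem continuous_burningSpeed {X : Type*} [TopologicalSpace X] {r : X → ℝ} (ha : 0 < a)
    (hab : a < b) (hr : Continuous r) (hlog : ∀ x, Real.log (b / a) < r x) :
    Continuous fun x => burningSpeed q a b (r x) :=
  Real.continuous_sqrt.comp ((by fun_prop : Continuous fun x => q * (Real.exp (r x) - 1 - r x)).div
    (by fun_prop) fun x => (burning_denom_pos ha hab (hlog x)).ne')

theorem tendsto_burningSpeed_mul_burningSlope (hq : 0 < q) (ha : 0 < a) (hab : a < b) :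
    Tendsto (fun r => burningSpeed q a b r * burningSlope q a b r)
      (nhdsWithin (Real.log (b / a)) (Ioi (Real.log (b / a)))) atTop := by
  set ρ := Real.log (b / a)
  have hb : 0 < b := ha.trans hab
  have hexp : a * Real.exp ρ - b = 0 := by
    rw [Real.exp_log (div_pos hb ha), mul_div_cancel₀ _ ha.ne', sub_self]
  have hnumer : Tendsto (fun r => q * (Real.exp r - 1 - r)) (nhdsWithin ρ (Ioi ρ))
      (nhds (q * (Real.exp ρ - 1 - ρ))) :=
    (Continuous.tendsto (by fun_prop) ρ).mono_left nhdsWithin_le_nhds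
  have hdenom : Tendsto (fun r => a * Real.exp r - b) (nhdsWithin ρ (Ioi ρ))
      (nhdsWithin 0 (Ioi 0)) := by
    refine tendsto_nhdsWithin_iff.2 ⟨?_, eventually_mem_nhdsWithin.mono fun r hr =>
      burning_denom_pos ha hab hr⟩
    exact hexp ▸ (Continuous.tendsto (by fun_prop) ρ).mono_left nhdsWithin_le_nhds
  have hlinear : Tendsto (fun r => -(q * r)) (nhdsWithin ρ (Ioi ρ)) (nhds (-(q * ρ))) :=
    (Continuous.tendsto (by fun_prop) ρ).mono_left nhdsWithin_le_nhds
  have hratio := (hnumer.pos_mul_atTop (burning_numer_pos hq (burning_log_pos ha hab))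
    (tendsto_inv_nhdsGT_zero.comp hdenom)).atTop_mul_const hb
  refine (hratio.atTop_add hlinear).congr' ?_
  filter_upwards [self_mem_nhdsWithin] with r hr
  rw [burningSpeed_mul_burningSlope hq ha hab hr, div_eq_mul_inv, Function.comp_apply,
    ← sub_eq_add_neg]

theorem log_div_lt_div (ha : 0 < a) (hab : a < b) : Real.log (b / a) < b / a := by
  have := Real.log_le_sub_one_of_pos (div_pos (ha.trans hab) ha)
  linarith

theorem burningSlope_div_neg (hq : 0 < q) (ha : 0 < a) (hab : a < b) :
    burningSlope q a b (b / a) < 0 := by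
  have hlog := log_div_lt_div ha hab
  have hprod : burningSpeed q a b (b / a) * burningSlope q a b (b / a) < 0 := by
    have hden := burning_denom_pos ha hab hlog
    rw [burningSpeed_mul_burningSlope hq ha hab hlog, sub_neg, div_mul_eq_mul_div, div_lt_iff₀ hden]
    obtain ⟨r, rfl⟩ : ∃ r, b = a * r := ⟨b / a, (mul_div_cancel₀ b ha.ne').symm⟩
    rw [mul_div_cancel_left₀ r ha.ne']
    linarith [mul_pos hq (ha.trans hab)]
  exact neg_of_mul_neg_right hprod (burningSpeed_pos hq ha hab hlog).le

theorem exists_burningSlope_gt (hq : 0 < q) (ha : 0 < a) (hab : a < b) (M : ℝ) :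
    ∃ r ∈ Ioo (Real.log (b / a)) (b / a),
      0 < burningSlope q a b r ∧ M < burningSpeed q a b r * burningSlope q a b r := by
  have hlt : ∀ᶠ r in nhdsWithin (Real.log (b / a)) (Ioi (Real.log (b / a))),
      r ∈ Ioo (Real.log (b / a)) (b / a) := Ioo_mem_nhdsGT (log_div_lt_div ha hab)
  obtain ⟨r, hr, hover⟩ := (hlt.and
    ((tendsto_burningSpeed_mul_burningSlope hq ha hab).eventually_gt_atTop (max M 0))).exists
  exact ⟨r, hr, pos_of_mul_pos_right ((le_max_right M 0).trans_lt hover)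
    (burningSpeed_pos hq ha hab hr.1).le, (le_max_left M 0).trans_lt hover⟩

theorem exists_trapped_curve_burningProfile {g : ℝ → ℝ} {K : NNReal} {M : ℝ} (hq : 0 < q)
    (ha : 0 < a) (hab : a < b) (hbe : b < e) (hgl : LipschitzWith K g) (hge : g e = 0)
    (hg : ∀ y ≠ e, 0 < (y - e) * g y) (hM : ∀ y, -M ≤ g y) :
    ∃ R c γ, 0 < R ∧ 0 < c ∧ burningProfile q a c R = b ∧ γ 0 = (b, c * b - q * R) ∧
      IsIntegralCurve γ (fun _ => phaseField g c) ∧ ∀ t, 0 ≤ t → (γ t).1 < e ∧ 0 < (γ t).2 := by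
  obtain ⟨r₁, hr₁, hpos, hover⟩ := exists_burningSlope_gt hq ha hab M
  have hlog : ∀ r : Icc r₁ (b / a), Real.log (b / a) < r := fun r => hr₁.1.trans_le r.2.1
  have hspeed := continuous_burningSpeed (q := q) ha hab continuous_subtype_val hlog
  have hslope : Continuous fun r : Icc r₁ (b / a) => burningSlope q a b r :=
    (hspeed.mul_const b).sub ((continuous_subtype_val.div hspeed fun r =>
      (burningSpeed_pos hq ha hab (hlog r)).ne').const_mul q)
  have : PreconnectedSpace (Icc r₁ (b / a)) := Subtype.preconnectedSpace isPreconnected_Icc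
  obtain ⟨r, γ, hγ0, hγ, htrap⟩ := exists_trapped_curve hspeed hslope hgl hge hg hbe
    (x₁ := ⟨r₁, left_mem_Icc.2 hr₁.2.le⟩) (x₂ := ⟨b / a, right_mem_Icc.2 hr₁.2.le⟩) hpos
    (fun y => (neg_le_neg hover.le).trans (hM y)) (burningSlope_div_neg hq ha hab)
  have hc := burningSpeed_pos hq ha hab (hlog r)
  exact ⟨r / burningSpeed q a b r, burningSpeed q a b r, γ,
    div_pos ((burning_log_pos ha hab).trans (hlog r)) hc, hc,
    burningProfile_interface hq ha hab (hlog r), hγ0, hγ, htrap⟩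

end Shooting

section Front

variable {L : ℝ → ℝ} {q a b e R c : ℝ} {θ p : ℝ → ℝ}

/-- The free-interface traveling-front problem of `IsAutoignitionFront` with an arbitrary heat-loss
law `L`, interface temperatures `a` and `b`, and burned temperature `e`. -/
def IsFront (L : ℝ → ℝ) (q a b e R c : ℝ) (θ : ℝ → ℝ) : Prop :=
  ContDiff ℝ 1 θ ∧
  StrictMono θ ∧
  θ 0 = a ∧
  θ R = b ∧
  ContDiffOn ℝ 2 θ (Iio 0) ∧
  ContDiffOn ℝ 2 θ (Ioo 0 R) ∧
  ContDiffOn ℝ 2 θ (Ioi R) ∧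
  (∀ x ∈ Iio (0 : ℝ), deriv (deriv θ) x - c * deriv θ x = 0) ∧
  (∀ x ∈ Ioo (0 : ℝ) R, deriv (deriv θ) x - c * deriv θ x + q = 0) ∧
  (∀ x ∈ Ioi R, deriv (deriv θ) x - c * deriv θ x + q - L (θ x) = 0) ∧
  Tendsto θ atBot (nhds 0) ∧
  Tendsto θ atTop (nhds e)

/-- The first-order form of `IsFront`, with the slope `p = θ'` as a second unknown. -/
structure FrontSystem (L : ℝ → ℝ) (q a b e R c : ℝ) (θ p : ℝ → ℝ) : Prop where
  hasDerivAt : ∀ x, HasDerivAt θ (p x) x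
  continuous_slope : Continuous p
  strictMono : StrictMono θ
  map_zero : θ 0 = a
  map_interface : θ R = b
  left : ∀ x < 0, HasDerivAt p (c * p x) x
  middle : ∀ x, 0 < x → x < R → HasDerivAt p (c * p x - q) x
  right : ∀ x, R < x → HasDerivAt p (c * p x - q + L (θ x)) x
  tendsto_atBot : Tendsto θ atBot (nhds 0)
  tendsto_atTop : Tendsto θ atTop (nhds e)

theorem hasDerivAt_deriv_of_contDiffOn_two {U : Set ℝ} (hθ : ContDiffOn ℝ 2 θ U) (hU : IsOpen U)
    {x : ℝ} (hx : x ∈ U) : HasDerivAt (deriv θ) (deriv (deriv θ) x) x := by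
  rw [← one_add_one_eq_two, contDiffOn_succ_iff_deriv_of_isOpen hU] at hθ
  exact ((hθ.2.2.differentiableOn one_ne_zero).differentiableAt (hU.mem_nhds hx)).hasDerivAt

theorem contDiffOn_two_of_hasDerivAt {p' : ℝ → ℝ} {U : Set ℝ} (hU : IsOpen U)
    (hθ : ∀ x ∈ U, HasDerivAt θ (p x) x) (hp : ∀ x ∈ U, HasDerivAt p (p' x) x)
    (hp' : ContinuousOn p' U) : ContDiffOn ℝ 2 θ U := by
  have hp1 : ContDiffOn ℝ 1 p U := by
    rw [← zero_add 1, contDiffOn_succ_iff_deriv_of_isOpen hU]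
    exact ⟨fun x hx => (hp x hx).differentiableAt.differentiableWithinAt, by simp,
      contDiffOn_zero.2 (hp'.congr fun x hx => (hp x hx).deriv)⟩
  rw [← one_add_one_eq_two, contDiffOn_succ_iff_deriv_of_isOpen hU]
  exact ⟨fun x hx => (hθ x hx).differentiableAt.differentiableWithinAt, by simp,
    hp1.congr fun x hx => (hθ x hx).deriv⟩

theorem IsFront.frontSystem (H : IsFront L q a b e R c θ) :
    FrontSystem L q a b e R c θ (deriv θ) := by
  obtain ⟨hC1, hmono, h0, hR, hleft, hmiddle, hright, eq_left, eq_middle, eq_right, hbot, htop⟩ := H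
  rw [contDiff_one_iff_deriv] at hC1
  refine ⟨fun x => (hC1.1 x).hasDerivAt, hC1.2, hmono, h0, hR, fun x hx => ?_, fun x hx hxR => ?_,
    fun x hx => ?_, hbot, htop⟩
  · exact (hasDerivAt_deriv_of_contDiffOn_two hleft isOpen_Iio hx).congr_deriv
      (by linarith [eq_left x hx])
  · exact (hasDerivAt_deriv_of_contDiffOn_two hmiddle isOpen_Ioo ⟨hx, hxR⟩).congr_deriv
      (by linarith [eq_middle x ⟨hx, hxR⟩])
  · exact (hasDerivAt_deriv_of_contDiffOn_two hright isOpen_Ioi hx).congr_deriv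
      (by linarith [eq_right x hx])

namespace FrontSystem

theorem continuous (H : FrontSystem L q a b e R c θ p) : Continuous θ :=
  continuous_iff_continuousAt.2 fun x => (H.hasDerivAt x).continuousAt

theorem pos (H : FrontSystem L q a b e R c θ p) (x : ℝ) : 0 < θ x :=
  (H.strictMono.monotone.le_of_tendsto H.tendsto_atBot (x - 1)).trans_lt
    (H.strictMono (sub_one_lt x))

theorem lt_limit (H : FrontSystem L q a b e R c θ p) (x : ℝ) : θ x < e :=
  (H.strictMono (lt_add_one x)).trans_le
    (H.strictMono.monotone.ge_of_tendsto H.tendsto_atTop (x + 1))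

theorem mem_Icc (H : FrontSystem L q a b e R c θ p) {x : ℝ} (hx : R ≤ x) : θ x ∈ Icc b e :=
  ⟨H.map_interface ▸ H.strictMono.monotone hx, (H.lt_limit x).le⟩

theorem isFront (H : FrontSystem L q a b e R c θ p) (hL : ContinuousOn L (Icc b e)) :
    IsFront L q a b e R c θ := by
  have hderiv : deriv θ = p := funext fun x => (H.hasDerivAt x).deriv
  have hp := H.continuous_slope.const_mul c
  refine ⟨contDiff_one_iff_deriv.2 ⟨fun x => (H.hasDerivAt x).differentiableAt,
      hderiv ▸ H.continuous_slope⟩, H.strictMono, H.map_zero, H.map_interface, ?_, ?_, ?_,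
    fun x hx => ?_, fun x hx => ?_, fun x hx => ?_, H.tendsto_atBot, H.tendsto_atTop⟩
  · exact contDiffOn_two_of_hasDerivAt isOpen_Iio (fun x _ => H.hasDerivAt x) H.left
      hp.continuousOn
  · exact contDiffOn_two_of_hasDerivAt isOpen_Ioo (fun x _ => H.hasDerivAt x)
      (fun x hx => H.middle x hx.1 hx.2) (hp.sub continuous_const).continuousOn
  · exact contDiffOn_two_of_hasDerivAt isOpen_Ioi (fun x _ => H.hasDerivAt x) H.right
      ((hp.sub continuous_const).continuousOn.add
        (hL.comp H.continuous.continuousOn fun x hx => H.mem_Icc (le_of_lt hx)))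
  · rw [hderiv, (H.left x hx).deriv, sub_self]
  · rw [hderiv, (H.middle x hx.1 hx.2).deriv]
    ring
  · rw [hderiv, (H.right x hx).deriv]
    ring

end FrontSystem

end Front

section Existence

variable {g : ℝ → ℝ} {q a b e R c : ℝ} {γ : ℝ → ℝ × ℝ}

/-- The profile glued from the preheat exponential, `burningProfile`, and the first component of the
phase curve `γ` started at the heat-loss interface `R`. -/
noncomputable def frontProfile (q a R c : ℝ) (γ : ℝ → ℝ × ℝ) (x : ℝ) : ℝ :=
  if x ≤ 0 then a * Real.exp (c * x) else
    if x ≤ R then burningProfile q a c x else (γ (x - R)).1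

/-- The derivative of `frontProfile`, see `hasDerivAt_frontProfile`. -/
noncomputable def frontSlope (q a R c : ℝ) (γ : ℝ → ℝ × ℝ) (x : ℝ) : ℝ :=
  if x ≤ 0 then c * (a * Real.exp (c * x)) else
    if x ≤ R then c * burningProfile q a c x - q * x else (γ (x - R)).2

theorem hasDerivAt_mul_exp (a c x : ℝ) :
    HasDerivAt (fun x => a * Real.exp (c * x)) (c * (a * Real.exp (c * x))) x :=
  (((hasDerivAt_id' x).const_mul c).exp.const_mul a).congr_deriv (by ring)

theorem hasDerivAt_burningProfile (hc : c ≠ 0) (x : ℝ) :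
    HasDerivAt (burningProfile q a c) (c * burningProfile q a c x - q * x) x :=
  ((((hasDerivAt_id' x).const_mul (q / c)).const_add (q / c ^ 2)).add
    (hasDerivAt_mul_exp (a - q / c ^ 2) c x)).congr_deriv (by
      rw [burningProfile]
      field_simp
      ring)

theorem hasDerivAt_burningProfile_slope (hc : c ≠ 0) (x : ℝ) :
    HasDerivAt (fun x => c * burningProfile q a c x - q * x)
      (c * (c * burningProfile q a c x - q * x) - q) x :=
  (((hasDerivAt_burningProfile hc x).const_mul c).sub
    ((hasDerivAt_id' x).const_mul q)).congr_deriv (by rw [mul_one])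

theorem burningProfile_zero : burningProfile q a c 0 = a := by
  simp [burningProfile]

theorem frontProfile_of_interface_lt (hR : 0 < R) {x : ℝ} (hx : R < x) :
    frontProfile q a R c γ x = (γ (x - R)).1 := by
  rw [frontProfile, if_neg (hR.trans hx).not_ge, if_neg hx.not_ge]

theorem frontSlope_of_interface_lt (hR : 0 < R) {x : ℝ} (hx : R < x) :
    frontSlope q a R c γ x = (γ (x - R)).2 := by
  rw [frontSlope, if_neg (hR.trans hx).not_ge, if_neg hx.not_ge]

theorem frontSlope_of_mem_Ioc {x : ℝ} (hx : x ∈ Ioc 0 R) :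
    frontSlope q a R c γ x = c * burningProfile q a c x - q * x := by
  rw [frontSlope, if_neg hx.1.not_ge, if_pos hx.2]

theorem hasDerivAt_frontProfile (hR : 0 < R) (hc : c ≠ 0) (hb : burningProfile q a c R = b)
    (h0 : γ 0 = (b, c * b - q * R)) (hγ : IsIntegralCurve γ fun _ => phaseField g c) (x : ℝ) :
    HasDerivAt (frontProfile q a R c γ) (frontSlope q a R c γ x) x := by
  have hburned : HasDerivAt (fun x => if x ≤ R then burningProfile q a c x else (γ (x - R)).1)
      (if x ≤ R then c * burningProfile q a c x - q * x else (γ (x - R)).2) x :=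
    hasDerivAt_ite_le (f' := fun x => c * burningProfile q a c x - q * x)
      (g' := fun x => (γ (x - R)).2) (fun _ => hasDerivAt_burningProfile hc x)
      (fun _ => (hasDerivAt_fst_of_phaseField hγ (x - R)).comp_sub_const x R)
      (by rw [sub_self, h0, hb]) (by rw [sub_self, h0, hb])
  refine hasDerivAt_ite_le (f' := fun x => c * (a * Real.exp (c * x)))
    (g' := fun x => if x ≤ R then c * burningProfile q a c x - q * x else (γ (x - R)).2)
    (fun _ => hasDerivAt_mul_exp a c x) (fun _ => hburned) ?_ ?_
  · rw [if_pos hR.le, burningProfile_zero, mul_zero, Real.exp_zero, mul_one]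
  · rw [if_pos hR.le, burningProfile_zero, mul_zero, Real.exp_zero, mul_one, mul_zero, sub_zero]

theorem continuous_frontSlope (hR : 0 < R) (hb : burningProfile q a c R = b)
    (h0 : γ 0 = (b, c * b - q * R)) (hγ : IsIntegralCurve γ fun _ => phaseField g c) :
    Continuous (frontSlope q a R c γ) := by
  have hburn : Continuous (burningProfile q a c) := by unfold burningProfile; fun_prop
  refine Continuous.if_le (by fun_prop) (Continuous.if_le (by fun_prop)
    (hγ.continuous.snd.comp (continuous_sub_right R)) continuous_id continuous_const ?_)
    continuous_id continuous_const ?_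
  · rintro x rfl
    rw [sub_self, h0, hb]
  · rintro x rfl
    rw [if_pos hR.le, burningProfile_zero, mul_zero, Real.exp_zero, mul_one, mul_zero, sub_zero]

theorem burningProfile_slope_pos (hq : 0 < q) (hc : 0 < c) {x : ℝ} (hxR : x ≤ R)
    (hR : 0 < c * burningProfile q a c R - q * R) : 0 < c * burningProfile q a c x - q * x := by
  have hform : ∀ x, c * burningProfile q a c x - q * x =
      Real.exp (c * x) * (q / c * Real.exp (-(c * x)) + (c * a - q / c)) := fun x => by
    rw [mul_add, mul_left_comm, ← Real.exp_add, add_neg_cancel, Real.exp_zero, burningProfile]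
    field_simp
    ring
  rw [hform] at hR ⊢
  refine mul_pos (Real.exp_pos _) ((pos_of_mul_pos_right hR (Real.exp_pos _).le).trans_le ?_)
  gcongr

theorem frontSlope_pos (hq : 0 < q) (ha : 0 < a) (hR : 0 < R) (hc : 0 < c)
    (hb : burningProfile q a c R = b) (h0 : γ 0 = (b, c * b - q * R))
    (hpos : ∀ t, 0 ≤ t → 0 < (γ t).2) (x : ℝ) : 0 < frontSlope q a R c γ x := by
  rcases le_or_gt x 0 with hx | hx
  · rw [frontSlope, if_pos hx]
    positivity
  rcases le_or_gt x R with hxR | hxR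
  · rw [frontSlope_of_mem_Ioc ⟨hx, hxR⟩]
    refine burningProfile_slope_pos hq hc hxR ?_
    simpa only [hb, h0] using hpos 0 le_rfl
  · rw [frontSlope_of_interface_lt hR hxR]
    exact hpos _ (sub_nonneg.2 hxR.le)

theorem hasDerivAt_frontSlope_left {x : ℝ} (hx : x < 0) :
    HasDerivAt (frontSlope q a R c γ) (c * frontSlope q a R c γ x) x := by
  have heq : EqOn (frontSlope q a R c γ) (fun x => c * (a * Real.exp (c * x))) (Iio 0) :=
    fun y hy => if_pos (le_of_lt hy)
  rw [heq hx]
  exact ((hasDerivAt_mul_exp a c x).const_mul c).congr_of_eventuallyEq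
    (heq.eventuallyEq_of_mem (Iio_mem_nhds hx))

theorem hasDerivAt_frontSlope_middle (hc : c ≠ 0) {x : ℝ} (hx : x ∈ Ioo 0 R) :
    HasDerivAt (frontSlope q a R c γ) (c * frontSlope q a R c γ x - q) x := by
  have heq : EqOn (frontSlope q a R c γ) (fun x => c * burningProfile q a c x - q * x) (Ioo 0 R) :=
    fun y hy => frontSlope_of_mem_Ioc (Ioo_subset_Ioc_self hy)
  rw [heq hx]
  exact (hasDerivAt_burningProfile_slope hc x).congr_of_eventuallyEq
    (heq.eventuallyEq_of_mem (Ioo_mem_nhds hx.1 hx.2))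

theorem hasDerivAt_frontSlope_right (hR : 0 < R)
    (hγ : IsIntegralCurve γ fun _ => phaseField g c) {x : ℝ} (hx : R < x) :
    HasDerivAt (frontSlope q a R c γ)
      (c * frontSlope q a R c γ x + g (frontProfile q a R c γ x)) x := by
  have heq : EqOn (frontSlope q a R c γ) (fun x => (γ (x - R)).2) (Ioi R) :=
    fun y hy => frontSlope_of_interface_lt hR hy
  rw [heq hx, frontProfile_of_interface_lt hR hx]
  exact ((hasDerivAt_snd_of_phaseField hγ (x - R)).comp_sub_const x R).congr_of_eventuallyEq
    (heq.eventuallyEq_of_mem (Ioi_mem_nhds hx))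

theorem tendsto_frontProfile_atBot (hc : 0 < c) :
    Tendsto (frontProfile q a R c γ) atBot (nhds 0) := by
  have hexp := (Real.tendsto_exp_atBot.comp (tendsto_id.const_mul_atBot hc)).const_mul a
  rw [mul_zero] at hexp
  refine hexp.congr' ?_
  filter_upwards [eventually_le_atBot 0] with x hx using (if_pos hx).symm

theorem tendsto_frontProfile_atTop (hR : 0 < R)
    (hlim : Tendsto (fun t => (γ t).1) atTop (nhds e)) :
    Tendsto (frontProfile q a R c γ) atTop (nhds e) := by
  refine (hlim.comp (tendsto_atTop_add_const_right atTop (-R) tendsto_id)).congr' ?_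
  filter_upwards [eventually_gt_atTop R] with x hx
  exact (frontProfile_of_interface_lt hR hx).symm

theorem frontSystem_frontProfile (hq : 0 < q) (ha : 0 < a) (hR : 0 < R) (hc : 0 < c)
    (hb : burningProfile q a c R = b) (hgc : Continuous g) (hg : ∀ y ≠ e, 0 < (y - e) * g y)
    (h0 : γ 0 = (b, c * b - q * R)) (hγ : IsIntegralCurve γ fun _ => phaseField g c)
    (htrap : ∀ t, 0 ≤ t → (γ t).1 < e ∧ 0 < (γ t).2) :
    FrontSystem (fun y => q + g y) q a b e R c (frontProfile q a R c γ) (frontSlope q a R c γ) where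
  hasDerivAt := hasDerivAt_frontProfile hR hc.ne' hb h0 hγ
  continuous_slope := continuous_frontSlope hR hb h0 hγ
  strictMono := strictMono_of_hasDerivAt_pos (hasDerivAt_frontProfile hR hc.ne' hb h0 hγ)
    (frontSlope_pos hq ha hR hc hb h0 fun t ht => (htrap t ht).2)
  map_zero := by rw [frontProfile, if_pos le_rfl, mul_zero, Real.exp_zero, mul_one]
  map_interface := by rw [frontProfile, if_neg hR.not_ge, if_pos le_rfl, hb]
  left x hx := hasDerivAt_frontSlope_left hx
  middle x hx hxR := hasDerivAt_frontSlope_middle hc.ne' ⟨hx, hxR⟩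
  right x hx := (hasDerivAt_frontSlope_right hR hγ hx).congr_deriv (by ring)
  tendsto_atBot := tendsto_frontProfile_atBot hc
  tendsto_atTop := tendsto_frontProfile_atTop hR (tendsto_of_trapped hgc hg hc.le hγ htrap)

theorem FrontSystem.congr_loss {L L' : ℝ → ℝ} {θ p : ℝ → ℝ} (H : FrontSystem L q a b e R c θ p)
    (hL : EqOn L L' (Icc b e)) : FrontSystem L' q a b e R c θ p where
  __ := H
  right x hx := hL (H.mem_Icc (le_of_lt hx)) ▸ H.right x hx

theorem exists_frontSystem {L : ℝ → ℝ} {K : NNReal} (hq : 0 < q) (ha : 0 < a) (hab : a < b)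
    (hbe : b < e) (hL : LipschitzOnWith K L (Icc b e)) (hlt : ∀ y ∈ Ico b e, L y < q)
    (hLe : L e = q) :
    ∃ R c θ p, 0 < R ∧ 0 < c ∧ FrontSystem L q a b e R c θ p := by
  obtain ⟨g, M, hgl, hg, hM, hgL⟩ := exists_lipschitzWith_truncation (f := fun y => L y - q) hbe
    (lipschitzOnWith_sub_const hL q) (fun y hy => sub_neg.2 (hlt y hy)) (sub_eq_zero.2 hLe)
  have hge : g e = 0 := (hgL (right_mem_Icc.2 hbe.le)).trans (sub_eq_zero.2 hLe)
  obtain ⟨R, c, γ, hR, hc, hb, h0, hγ, htrap⟩ :=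
    exists_trapped_curve_burningProfile hq ha hab hbe hgl hge hg hM
  refine ⟨R, c, _, _, hR, hc,
    (frontSystem_frontProfile hq ha hR hc hb hgl.continuous hg h0 hγ htrap).congr_loss ?_⟩
  intro y hy
  simp only [hgL hy, add_sub_cancel]

end Existence

section Uniqueness

theorem eq_zero_of_tendsto_deriv_atBot {f f' : ℝ → ℝ} {l k : ℝ}
    (hf : ∀ x, HasDerivAt f (f' x) x) (hl : Tendsto f atBot (nhds l))
    (hk : Tendsto f' atBot (nhds k)) : k = 0 := by
  have hmean : ∀ x, ∃ ξ ≤ x + 1, f' ξ = f (x + 1) - f x := fun x => by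
    obtain ⟨ξ, hξ, heq⟩ := exists_hasDerivAt_eq_slope f f' (lt_add_one x)
      (fun y _ => (hf y).continuousAt.continuousWithinAt) fun y _ => hf y
    exact ⟨ξ, hξ.2.le, by rw [heq, add_sub_cancel_left, div_one]⟩
  choose ξ hξ heq using hmean
  have hshift : Tendsto (fun x : ℝ => x + 1) atBot atBot :=
    tendsto_atBot_add_const_right _ 1 tendsto_id
  have hdiff := (hl.comp hshift).sub hl
  rw [sub_self] at hdiff
  exact tendsto_nhds_unique (hk.comp (tendsto_atBot_mono hξ hshift))
    (hdiff.congr fun x => (heq x).symm)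

theorem hasDerivWithinAt_Ici_of_hasDerivAt_Ioo {f g : ℝ → ℝ} {x y : ℝ} (hxy : x < y)
    (hf : ContinuousAt f x) (hg : ContinuousWithinAt g (Ici x) x)
    (h : ∀ z ∈ Ioo x y, HasDerivAt f (g z) z) : HasDerivWithinAt f (g x) (Ici x) x := by
  refine hasDerivWithinAt_Ici_of_tendsto_deriv (s := Ioo x y)
    (fun z hz => (h z hz).differentiableAt.differentiableWithinAt) hf.continuousWithinAt
    (Ioo_mem_nhdsGT hxy) ((hg.mono Ioi_subset_Ici_self).tendsto.congr' ?_)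
  filter_upwards [Ioo_mem_nhdsGT hxy] with z hz using (h z hz).deriv.symm

theorem exists_lt_of_hasDerivWithinAt_Ici_neg {f : ℝ → ℝ} {f' x : ℝ}
    (hf : HasDerivWithinAt f f' (Ici x) x) (hf' : f' < 0) : ∃ y, f y < f x := by
  have hslope := hf.Ioi_of_Ici.limsup_slope_le' self_notMem_Ioi hf'
  obtain ⟨y, hneg, hxy⟩ := (hslope.and self_mem_nhdsWithin).exists
  rw [slope_def_field] at hneg
  exact ⟨y, not_le.1 fun hle => hneg.not_ge (div_nonneg (sub_nonneg.2 hle) (sub_pos.2 hxy).le)⟩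

namespace FrontSystem

variable {L : ℝ → ℝ} {K : NNReal} {q a b e R c : ℝ} {θ p : ℝ → ℝ}

theorem slope_eq_left (H : FrontSystem L q a b e R c θ p) {x : ℝ} (hx : x ≤ 0) :
    p x = c * θ x := by
  have hconst : ∀ y ≤ (0 : ℝ), p y = c * θ y + (p 0 - c * θ 0) := fun y hy => by
    have := constant_of_has_deriv_right_zero (f := fun x => p x - c * θ x)
      (H.continuous_slope.sub (H.continuous.const_mul c)).continuousOn
      (fun z hz => (((H.left z hz.2).sub ((H.hasDerivAt z).const_mul c)).congr_deriv
        (sub_self _)).hasDerivWithinAt) 0 (right_mem_Icc.2 hy)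
    linarith
  have hlim : Tendsto p atBot (nhds (c * 0 + (p 0 - c * θ 0))) := by
    refine ((H.tendsto_atBot.const_mul c).add_const _).congr' ?_
    filter_upwards [eventually_le_atBot 0] with y hy using (hconst y hy).symm
  have hzero := eq_zero_of_tendsto_deriv_atBot H.hasDerivAt H.tendsto_atBot hlim
  linarith [hconst x hx]

theorem speed_pos (H : FrontSystem L q a b e R c θ p) : 0 < c := by
  obtain ⟨ξ, hξ, heq⟩ := exists_hasDerivAt_eq_slope θ p (neg_one_lt_zero (R := ℝ))
    H.continuous.continuousOn fun x _ => H.hasDerivAt x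
  have hslope : 0 < c * θ ξ := by
    rw [← H.slope_eq_left hξ.2.le, heq]
    exact div_pos (sub_pos.2 (H.strictMono neg_one_lt_zero)) (by norm_num)
  exact pos_of_mul_pos_left hslope (H.pos ξ).le

theorem hasDerivWithinAt_slope_middle (H : FrontSystem L q a b e R c θ p) {x : ℝ} (hx : 0 ≤ x)
    (hxR : x < R) : HasDerivWithinAt p (c * p x - q) (Ici x) x :=
  hasDerivWithinAt_Ici_of_hasDerivAt_Ioo (g := fun x => c * p x - q) hxR
    H.continuous_slope.continuousAt
    ((H.continuous_slope.const_mul c).sub continuous_const).continuousWithinAt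
    fun z hz => H.middle z (hx.trans_lt hz.1) hz.2

theorem hasDerivWithinAt_slope_right (H : FrontSystem L q a b e R c θ p)
    (hL : ContinuousOn L (Icc b e)) {x : ℝ} (hx : R ≤ x) :
    HasDerivWithinAt p (c * p x - q + L (θ x)) (Ici x) x := by
  have hloss : ContinuousOn (fun x => L (θ x)) (Ici R) :=
    hL.comp H.continuous.continuousOn fun y hy => H.mem_Icc hy
  exact hasDerivWithinAt_Ici_of_hasDerivAt_Ioo (g := fun x => c * p x - q + L (θ x)) (lt_add_one x)
    H.continuous_slope.continuousAt
    (((H.continuous_slope.const_mul c).sub continuous_const).continuousWithinAt.add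
      ((hloss x hx).mono (Ici_subset_Ici.2 hx)))
    fun z hz => H.right z (hx.trans_lt hz.1)

theorem slope_eq_of_le_interface (H : FrontSystem L q a b e R c θ p) {x : ℝ} (hx : x ≤ R) :
    p x = c * θ x - q * max 0 x := by
  rcases le_total x 0 with h0 | h0
  · rw [H.slope_eq_left h0, max_eq_left h0, mul_zero, sub_zero]
  have := constant_of_has_deriv_right_zero (f := fun x => p x - c * θ x + q * x)
    ((H.continuous_slope.sub (H.continuous.const_mul c)).add (by fun_prop)).continuousOn
    (fun z hz => (((H.hasDerivWithinAt_slope_middle hz.1 (hz.2.trans_le hx)).sub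
      ((H.hasDerivAt z).const_mul c).hasDerivWithinAt).add
      ((hasDerivAt_id' z).const_mul q).hasDerivWithinAt).congr_deriv (by ring))
    x (right_mem_Icc.2 h0)
  rw [max_eq_right h0]
  linarith [H.slope_eq_left le_rfl]

/-- The net heat loss of the burning mixture, as a function of the temperature. -/
noncomputable def netLoss (L : ℝ → ℝ) (q b y : ℝ) : ℝ :=
  if y < b then -q else L y - q

theorem netLoss_neg (hq : 0 < q) (hlt : ∀ y ∈ Ico b e, L y < q) {y : ℝ} (hy : y < e) :
    netLoss L q b y < 0 := by
  rw [netLoss]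
  split_ifs with hyb
  · exact neg_neg_of_pos hq
  · exact sub_neg.2 (hlt y ⟨not_lt.1 hyb, hy⟩)

theorem hasDerivWithinAt_slope (H : FrontSystem L q a b e R c θ p)
    (hL : ContinuousOn L (Icc b e)) {x : ℝ} (hx : 0 ≤ x) :
    HasDerivWithinAt p (c * p x + netLoss L q b (θ x)) (Ici x) x := by
  rcases lt_or_ge x R with hxR | hxR
  · rw [netLoss, if_pos (H.map_interface ▸ H.strictMono hxR), ← sub_eq_add_neg]
    exact H.hasDerivWithinAt_slope_middle hx hxR
  · rw [netLoss, if_neg (H.mem_Icc hxR).1.not_gt, ← add_sub_assoc, add_sub_right_comm]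
    exact H.hasDerivWithinAt_slope_right hL hxR

theorem slope_pos (H : FrontSystem L q a b e R c θ p) (hq : 0 < q)
    (hL : ContinuousOn L (Icc b e)) (hlt : ∀ y ∈ Ico b e, L y < q) (x : ℝ) : 0 < p x := by
  have hnonneg : ∀ x, 0 ≤ p x := fun x =>
    (H.hasDerivAt x).deriv ▸ H.strictMono.monotone.deriv_nonneg
  rcases le_total x 0 with hx | hx
  · rw [H.slope_eq_left hx]
    exact mul_pos H.speed_pos (H.pos x)
  refine (hnonneg x).lt_of_ne' fun h0 => ?_
  have hderiv := H.hasDerivWithinAt_slope hL hx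
  rw [h0, mul_zero, zero_add] at hderiv
  obtain ⟨y, hy⟩ := exists_lt_of_hasDerivWithinAt_Ici_neg hderiv (netLoss_neg hq hlt (H.lt_limit x))
  exact (h0 ▸ hy).not_ge (hnonneg y)

/-- The phase curve of a front: its slope as a function of the temperature (meaningful only on the
range of `θ`). -/
noncomputable def phaseCurve (θ p : ℝ → ℝ) (y : ℝ) : ℝ :=
  p (Function.invFun θ y)

theorem phaseCurve_apply (H : FrontSystem L q a b e R c θ p) (x : ℝ) :
    phaseCurve θ p (θ x) = p x := by
  rw [phaseCurve, Function.leftInverse_invFun H.strictMono.injective x]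

theorem exists_apply_eq (H : FrontSystem L q a b e R c θ p) {y : ℝ} (hy : y ∈ Ico a e) :
    ∃ x, 0 ≤ x ∧ θ x = y := by
  obtain ⟨u, hu⟩ := (H.tendsto_atTop.eventually_const_lt hy.2).exists
  have h0u : 0 ≤ u := H.strictMono.le_iff_le.1 (H.map_zero.trans_le (hy.1.trans hu.le))
  obtain ⟨x, hx, rfl⟩ := intermediate_value_Icc h0u H.continuous.continuousOn
    ⟨H.map_zero.trans_le hy.1, hu.le⟩
  exact ⟨x, hx.1, rfl⟩

theorem hasDerivAt_invFun (H : FrontSystem L q a b e R c θ p) {x : ℝ} (hp : p x ≠ 0) :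
    HasDerivAt (Function.invFun θ) (p x)⁻¹ (θ x) :=
  ((hasStrictDerivAt_of_hasDerivAt_of_continuousAt (Eventually.of_forall H.hasDerivAt)
    H.continuous_slope.continuousAt).to_local_left_inverse hp (Eventually.of_forall
      (Function.leftInverse_invFun H.strictMono.injective))).hasDerivAt

theorem continuousAt_phaseCurve (H : FrontSystem L q a b e R c θ p) {x : ℝ} (hp : p x ≠ 0) :
    ContinuousAt (phaseCurve θ p) (θ x) :=
  H.continuous_slope.continuousAt.comp (H.hasDerivAt_invFun hp).continuousAt

theorem image_Ici_mem_nhdsGE (H : FrontSystem L q a b e R c θ p) (x : ℝ) :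
    θ '' Ici x ∈ nhdsWithin (θ x) (Ici (θ x)) :=
  mem_of_superset (Icc_mem_nhdsGE (H.strictMono (lt_add_one x)))
    ((intermediate_value_Icc (lt_add_one x).le H.continuous.continuousOn).trans
      (image_mono Icc_subset_Ici_self))

-- Only one-sided, because `netLoss` jumps at the heat-loss temperature `b`.
theorem hasDerivWithinAt_phaseCurve (H : FrontSystem L q a b e R c θ p)
    (hL : ContinuousOn L (Icc b e)) {x : ℝ} (hx : 0 ≤ x) (hp : p x ≠ 0) :
    HasDerivWithinAt (phaseCurve θ p)
      (c + netLoss L q b (θ x) / phaseCurve θ p (θ x)) (Ici (θ x)) (θ x) := by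
  have hinv := Function.leftInverse_invFun H.strictMono.injective
  have hmaps : MapsTo (Function.invFun θ) (θ '' Ici x) (Ici x) := by
    rintro _ ⟨y, hy, rfl⟩
    rwa [hinv y]
  have hslope := H.hasDerivWithinAt_slope hL hx
  rw [← hinv x] at hslope
  have hcomp := hslope.comp (θ x) (H.hasDerivAt_invFun hp).hasDerivWithinAt (by rwa [hinv x])
  refine (hcomp.mono_of_mem_nhdsWithin (H.image_Ici_mem_nhdsGE x)).congr_deriv ?_
  rw [hinv x, H.phaseCurve_apply]
  field_simp

variable {R' c' : ℝ} {θ' p' : ℝ → ℝ}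

theorem continuousOn_phaseCurve (H : FrontSystem L q a b e R c θ p) (hp : ∀ x, p x ≠ 0) {v : ℝ}
    (hv : v < e) : ContinuousOn (phaseCurve θ p) (Icc a v) := fun y hy => by
  obtain ⟨x, -, rfl⟩ := H.exists_apply_eq ⟨hy.1, hy.2.trans_lt hv⟩
  exact (H.continuousAt_phaseCurve (hp x)).continuousWithinAt

theorem phaseCurve_pos (H : FrontSystem L q a b e R c θ p) (hp : ∀ x, 0 < p x) {y : ℝ}
    (hy : y ∈ Ico a e) : 0 < phaseCurve θ p y := by
  obtain ⟨x, -, rfl⟩ := H.exists_apply_eq hy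
  exact (hp x).trans_eq (H.phaseCurve_apply x).symm

theorem hasDerivWithinAt_phaseCurve_of_mem (H : FrontSystem L q a b e R c θ p)
    (hL : ContinuousOn L (Icc b e)) (hp : ∀ x, p x ≠ 0) {y : ℝ} (hy : y ∈ Ico a e) :
    HasDerivWithinAt (phaseCurve θ p) (c + netLoss L q b y / phaseCurve θ p y) (Ici y) y := by
  obtain ⟨x, hx, rfl⟩ := H.exists_apply_eq hy
  exact H.hasDerivWithinAt_phaseCurve hL hx (hp x)

theorem phaseCurve_start (H : FrontSystem L q a b e R c θ p) : phaseCurve θ p a = c * a := by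
  have := H.phaseCurve_apply 0
  rwa [H.slope_eq_left le_rfl, H.map_zero] at this

theorem phaseCurve_add_le (H : FrontSystem L q a b e R c θ p)
    (H' : FrontSystem L q a b e R' c' θ' p') (hq : 0 < q) (hL : ContinuousOn L (Icc b e))
    (hlt : ∀ y ∈ Ico b e, L y < q) (hcc : c < c') {y : ℝ} (hy : y ∈ Ico a e) :
    phaseCurve θ p y + (c' - c) * a ≤ phaseCurve θ' p' y := by
  have hp := H.slope_pos hq hL hlt
  have hp' := H'.slope_pos hq hL hlt
  have hδ : 0 < (c' - c) * a := mul_pos (sub_pos.2 hcc) (H.map_zero ▸ H.pos 0)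
  have hsub : Ico a y ⊆ Ico a e := Ico_subset_Ico_right hy.2.le
  have hle := image_le_of_deriv_right_lt_deriv_boundary'
    (f := fun z => phaseCurve θ p z - phaseCurve θ' p' z) (B := fun _ => -((c' - c) * a))
    ((H.continuousOn_phaseCurve (fun x => (hp x).ne') hy.2).sub
      (H'.continuousOn_phaseCurve (fun x => (hp' x).ne') hy.2))
    (fun z hz => (H.hasDerivWithinAt_phaseCurve_of_mem hL (fun x => (hp x).ne') (hsub hz)).sub
      (H'.hasDerivWithinAt_phaseCurve_of_mem hL (fun x => (hp' x).ne') (hsub hz)))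
    (by rw [H.phaseCurve_start, H'.phaseCurve_start]; linarith) continuousOn_const
    (fun z _ => hasDerivWithinAt_const z _ _) (fun z hz heq => ?_) (right_mem_Icc.2 hy.1)
  · linarith
  · have hloss := div_lt_div_of_pos_left (neg_pos.2 (netLoss_neg hq hlt (hsub hz).2))
      (H.phaseCurve_pos hp (hsub hz))
      (by linarith : phaseCurve θ p z < phaseCurve θ' p' z)
    rw [neg_div, neg_div] at hloss
    linarith

theorem speed_le (H : FrontSystem L q a b e R c θ p) (H' : FrontSystem L q a b e R' c' θ' p')
    (hq : 0 < q) (hL : ContinuousOn L (Icc b e)) (hlt : ∀ y ∈ Ico b e, L y < q) : c' ≤ c := by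
  by_contra! hcc
  have hδ : 0 < (c' - c) * a := mul_pos (sub_pos.2 hcc) (H.map_zero ▸ H.pos 0)
  have hslope : ∀ x, 0 ≤ x → (c' - c) * a ≤ p' x := fun x hx => by
    have hmem : θ' x ∈ Ico a e := ⟨H'.map_zero ▸ H'.strictMono.monotone hx, H'.lt_limit x⟩
    have hle := H.phaseCurve_add_le H' hq hL hlt hcc hmem
    rw [H'.phaseCurve_apply] at hle
    linarith [H.phaseCurve_pos (H.slope_pos hq hL hlt) hmem]
  exact not_tendsto_atTop_of_tendsto_nhds H'.tendsto_atTop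
    (tendsto_atTop_of_le_deriv hδ (fun x _ => H'.hasDerivAt x) hslope)

theorem eq_of_le_interface (H : FrontSystem L q a b e R c θ p)
    (H' : FrontSystem L q a b e R' c θ' p') (hR : 0 ≤ R) (hR' : 0 ≤ R') {x : ℝ} (hx : x ≤ R)
    (hx' : x ≤ R') : θ x = θ' x := by
  have hderiv : ∀ z ≤ max x 0,
      HasDerivAt (fun x => Real.exp (-c * x) * (θ x - θ' x)) 0 z := fun z hz => by
    refine (((hasDerivAt_id' z).const_mul (-c)).exp.mul
      ((H.hasDerivAt z).sub (H'.hasDerivAt z))).congr_deriv ?_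
    rw [H.slope_eq_of_le_interface (hz.trans (max_le hx hR)),
      H'.slope_eq_of_le_interface (hz.trans (max_le hx' hR')), Pi.sub_apply]
    ring
  have hconst := constant_of_has_deriv_right_zero (a := min x 0) (b := max x 0)
    (fun z hz => (hderiv z hz.2).continuousAt.continuousWithinAt)
    (fun z hz => (hderiv z hz.2.le).hasDerivWithinAt)
  have heq := (hconst x ⟨min_le_left x 0, le_max_left x 0⟩).trans
    (hconst 0 ⟨min_le_right x 0, le_max_right x 0⟩).symm
  rw [H.map_zero, H'.map_zero, sub_self, mul_zero] at heq
  exact sub_eq_zero.1 ((mul_eq_zero.1 heq).resolve_left (Real.exp_ne_zero _))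

theorem interface_le (H : FrontSystem L q a b e R c θ p)
    (H' : FrontSystem L q a b e R' c θ' p') (hR : 0 ≤ R) (hR' : 0 ≤ R') : R' ≤ R := by
  by_contra! hlt
  have heq := H.eq_of_le_interface H' hR hR' le_rfl hlt.le
  rw [H.map_interface, ← H'.map_interface] at heq
  exact hlt.ne (H'.strictMono.injective heq).symm

theorem hasDerivWithinAt_phaseField (H : FrontSystem L q a b e R c θ p)
    (hL : ContinuousOn L (Icc b e)) {x : ℝ} (hx : R ≤ x) :
    HasDerivWithinAt (fun x => (θ x, p x)) (phaseField (fun y => L y - q) c (θ x, p x)) (Ici x) x :=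
  (H.hasDerivAt x).hasDerivWithinAt.prodMk
    ((H.hasDerivWithinAt_slope_right hL hx).congr_deriv (by ring))

theorem eq_of_interface_le (H : FrontSystem L q a b e R c θ p)
    (H' : FrontSystem L q a b e R c θ' p') (hL : LipschitzOnWith K L (Icc b e)) {x : ℝ}
    (hx : R ≤ x) : θ x = θ' x := by
  have hlip : LipschitzOnWith (1 + ‖c‖₊ + K) (phaseField (fun y => L y - q) c)
      (Icc b e ×ˢ univ) := lipschitzOnWith_phaseField (lipschitzOnWith_sub_const hL q) le_rfl
  have heq := ODE_solution_unique_of_mem_Icc_right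
    (v := fun _ => phaseField (fun y => L y - q) c) (s := fun _ => Icc b e ×ˢ univ)
    (f := fun x => (θ x, p x)) (g := fun x => (θ' x, p' x)) (a := R) (b := x) (fun _ _ => hlip)
    (H.continuous.prodMk H.continuous_slope).continuousOn
    (fun t ht => H.hasDerivWithinAt_phaseField hL.continuousOn ht.1)
    (fun t ht => ⟨H.mem_Icc ht.1, mem_univ _⟩)
    (H'.continuous.prodMk H'.continuous_slope).continuousOn
    (fun t ht => H'.hasDerivWithinAt_phaseField hL.continuousOn ht.1)
    (fun t ht => ⟨H'.mem_Icc ht.1, mem_univ _⟩)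
    (by rw [H.slope_eq_of_le_interface le_rfl, H'.slope_eq_of_le_interface le_rfl,
      H.map_interface, H'.map_interface])
  exact congrArg Prod.fst (heq (right_mem_Icc.2 hx))

theorem interface_pos (H : FrontSystem L q a b e R c θ p) (hab : a < b) : 0 < R :=
  H.strictMono.lt_iff_lt.1 (by rwa [H.map_zero, H.map_interface])

theorem unique (H : FrontSystem L q a b e R c θ p) (H' : FrontSystem L q a b e R' c' θ' p')
    (hq : 0 < q) (hab : a < b) (hL : LipschitzOnWith K L (Icc b e))
    (hlt : ∀ y ∈ Ico b e, L y < q) : R' = R ∧ c' = c ∧ θ' = θ := by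
  obtain rfl : c' = c := le_antisymm (H.speed_le H' hq hL.continuousOn hlt)
    (H'.speed_le H hq hL.continuousOn hlt)
  have hR := (H.interface_pos hab).le
  have hR' := (H'.interface_pos hab).le
  obtain rfl : R' = R := le_antisymm (H.interface_le H' hR hR') (H'.interface_le H hR' hR)
  refine ⟨rfl, rfl, funext fun x => ?_⟩
  rcases le_total x R' with hx | hx
  · exact H'.eq_of_le_interface H hR' hR hx hx
  · exact H'.eq_of_interface_le H hL hx

end FrontSystem

end Uniqueness

/-- The radiative heat loss at scaled temperature `y`. -/
def radiativeLoss (h y : ℝ) : ℝ :=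
  h * ((1 + y) ^ 4 - 1)

theorem radiativeLoss_lt {h y z : ℝ} (hh : 0 < h) (hy : 0 ≤ y) (hyz : y < z) :
    radiativeLoss h y < radiativeLoss h z := by
  have hpow : (1 + y) ^ 4 < (1 + z) ^ 4 := by gcongr
  exact mul_lt_mul_of_pos_left (sub_lt_sub_right hpow 1) hh

theorem radiativeLoss_equilibrium {q h : ℝ} (hq : 0 < q) (hh : 0 < h) :
    radiativeLoss h ((1 + q / h) ^ ((1 : ℝ) / 4) - 1) = q := by
  have hpow : ((1 + q / h) ^ ((1 : ℝ) / 4)) ^ 4 = 1 + q / h := by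
    rw [← Real.rpow_natCast, ← Real.rpow_mul (by positivity)]
    norm_num
  rw [radiativeLoss, add_sub_cancel, hpow, add_sub_cancel_left, mul_div_cancel₀ _ hh.ne']

theorem exists_lipschitzOnWith_radiativeLoss (h b e : ℝ) :
    ∃ K, LipschitzOnWith K (radiativeLoss h) (Icc b e) := by
  have hsmooth : ContDiff ℝ 1 (radiativeLoss h) := by unfold radiativeLoss; fun_prop
  exact LocallyLipschitzOn.exists_lipschitzOnWith_of_compact isCompact_Icc
    hsmooth.locallyLipschitz.locallyLipschitzOn

theorem stmt0_general {L : ℝ → ℝ} {K : NNReal} {q a b e : ℝ} (hq : 0 < q) (ha : 0 < a)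
    (hab : a < b) (hbe : b < e) (hL : LipschitzOnWith K L (Icc b e))
    (hlt : ∀ y ∈ Ico b e, L y < q) (hLe : L e = q) :
    ∃ R c : ℝ, ∃ θ : ℝ → ℝ, 0 < R ∧ 0 < c ∧ IsFront L q a b e R c θ ∧
      ∀ R' c' : ℝ, ∀ θ' : ℝ → ℝ, IsFront L q a b e R' c' θ' → R' = R ∧ c' = c ∧ θ' = θ := by
  obtain ⟨R, c, θ, p, hR, hc, H⟩ := exists_frontSystem hq ha hab hbe hL hlt hLe
  exact ⟨R, c, θ, hR, hc, H.isFront hL.continuousOn, fun R' c' θ' H' =>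
    H.unique H'.frontSystem hq hab hL hlt⟩

/-- Existence and uniqueness of the traveling front: there are `R* > 0`, `c* > 0`
and a profile `θ*`, and any other front (normalized by `θ(0) = θ_ig`) coincides
with it. -/
theorem stmt0 (q h θig θhl θp : ℝ) (hq : 0 < q) (hh : 0 < h)
    (hθp : θp = (1 + q / h) ^ ((1 : ℝ) / 4) - 1)
    (h1 : 0 < θig) (h2 : θig < θhl) (h3 : θhl < θp) :
    ∃ R c : ℝ, ∃ θ : ℝ → ℝ, 0 < R ∧ 0 < c ∧
      IsAutoignitionFront q h θig θhl θp R c θ ∧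
      ∀ R' c' : ℝ, ∀ θ' : ℝ → ℝ, 0 < R' → 0 < c' →
        IsAutoignitionFront q h θig θhl θp R' c' θ' →
        R' = R ∧ c' = c ∧ θ' = θ := by
  obtain ⟨K, hK⟩ := exists_lipschitzOnWith_radiativeLoss h θhl θp
  have hLe : radiativeLoss h θp = q := hθp ▸ radiativeLoss_equilibrium hq hh
  obtain ⟨R, c, θ, hR, hc, H, huniq⟩ := stmt0_general hq h1 h2 h3 hK
    (fun y hy => hLe ▸ radiativeLoss_lt hh (h1.trans (h2.trans_le hy.1)).le hy.2) hLe
  exact ⟨R, c, θ, hR, hc, H, fun R' c' θ' _ _ => huniq R' c' θ'⟩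
end

section
/- There exist R₀ > 0 and c₀ > 0 with c₀·θ_hl = q·R₀ and G(R₀, c₀) = 0, and a function φ : (0, R₀] → ℝ such that: φ is C^∞ on (0, R₀] and strictly decreasing; φ(R₀) = c₀; φ(R) → +∞ as R → 0⁺; for every R ∈ (0, R₀] one has φ(R)·θ_hl ≥ q·R and G(R, φ(R)) = 0; and conversely, every pair (R, c) with R > 0, c·θ_hl ≥ q·R and G(R, c) = 0 satisfies R ≤ R₀ and c = φ(R). In particular, the level set {(R,c) : R > 0, c·θ_hl ≥ q·R, G(R,c) = 0} is the graph of the smooth decreasing function φ, with right endpoint (R₀, c₀) on the line cθ_hl = qR and the axis R = 0 as asymptote on the left. -/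
open Set Filter

/-- The transcendental function `G(R,c) = q(e^{cR} − 1 − cR) − c²(θ_ig e^{cR} − θ_hl)`. -/
noncomputable def G (q θig θhl R c : ℝ) : ℝ :=
  q * (Real.exp (c * R) - 1 - c * R) - c ^ 2 * (θig * Real.exp (c * R) - θhl)

/-!
On the level set put `x = c * R`. Then `G = 0` determines `c ^ 2` as a function of `x`, so the level
set is a curve `x ↦ (x / c(x), c(x))`, defined as long as `θig * exp x > θhl`. The derivative of
`c⁻²` along the curve and the constraint `c * θhl - q * R` have the same sign, namely that of
`θhl * (exp x - 1) - θig * x * exp x`, which changes sign exactly once on `(0, ∞)`, at a point `b`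
where the curve meets the line `c * θhl = q * R`. Hence the part of the curve in `Q₊` is the part
`x ≤ b`, and there `c` decreases, so that `R = x / c` increases and can be inverted.
-/

section Inverse

theorem contDiffWithinAt_of_rightInvOn {𝕜 E F : Type*} [RCLike 𝕜] [NormedAddCommGroup E]
    [NormedSpace 𝕜 E] [CompleteSpace E] [NormedAddCommGroup F] [NormedSpace 𝕜 F]
    {n : WithTop ℕ∞} {f : E → F} {g : F → E} {f' : E ≃L[𝕜] F} {t : Set F} {y : F}
    (hf : ContDiffAt 𝕜 n f (g y)) (hf' : HasFDerivAt f (f' : E →L[𝕜] F) (g y)) (hn : n ≠ 0)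
    (hg : ContinuousWithinAt g t y) (hfg : RightInvOn g f t) (hy : y ∈ t) :
    ContDiffWithinAt 𝕜 n g t y := by
  have hleft : ∀ᶠ x in nhds (g y), hf.localInverse hf' hn (f x) = x :=
    (hf.hasStrictFDerivAt' hf' hn).eventually_left_inverse
  have hinv : ContDiffAt 𝕜 n (hf.localInverse hf' hn) y := by
    simpa only [hfg hy] using hf.to_localInverse hf' hn
  refine hinv.contDiffWithinAt.congr_of_eventuallyEq_of_mem ?_ hy
  filter_upwards [hg.eventually hleft, self_mem_nhdsWithin] with z hz hzt
  rw [← hz, hfg hzt]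

theorem continuousOn_invFunOn_image {α β : Type*} [LinearOrder α] [TopologicalSpace α]
    [OrderTopology α] [Nonempty α] [LinearOrder β] [TopologicalSpace β] [OrderTopology β]
    {f : α → β} {s : Set α} [s.OrdConnected] [(f '' s).OrdConnected] (hf : StrictMonoOn f s) :
    ContinuousOn (Function.invFunOn f s) (f '' s) := by
  have hsymm : (f '' s).domRestrict (Function.invFunOn f s) =
      Subtype.val ∘ (hf.orderIso f s).symm := by
    ext ⟨_, x, hx, rfl⟩
    have hx' : (hf.orderIso f s).symm ⟨f x, x, hx, rfl⟩ = ⟨x, hx⟩ :=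
      (hf.orderIso f s).symm_apply_apply ⟨x, hx⟩
    simp only [domRestrict_apply, Function.comp_apply, hx', hf.injOn.leftInvOn_invFunOn hx]
  rw [continuousOn_iff_continuous_domRestrict, hsymm]
  exact continuous_subtype_val.comp (hf.orderIso f s).symm.continuous

theorem contDiffOn_invFunOn_image {n : WithTop ℕ∞} {f : ℝ → ℝ} {s : Set ℝ} [s.OrdConnected]
    (hmono : StrictMonoOn f s) (hf : ∀ x ∈ s, ContDiffAt ℝ n f x) (hn : n ≠ 0)
    (hf' : ∀ x ∈ s, deriv f x ≠ 0) :
    ContDiffOn ℝ n (Function.invFunOn f s) (f '' s) := by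
  have hcont : ContinuousOn f s := fun x hx => (hf x hx).continuousAt.continuousWithinAt
  have : (f '' s).OrdConnected := (‹s.OrdConnected›.isPreconnected.image f hcont).ordConnected
  rintro _ ⟨x, hx, rfl⟩
  have hinv : Function.invFunOn f s (f x) = x := hmono.injOn.leftInvOn_invFunOn hx
  have hder : HasDerivAt f (deriv f x) x := ((hf x hx).differentiableAt hn).hasDerivAt
  exact contDiffWithinAt_of_rightInvOn (by simpa only [hinv] using hf x hx)
    (by simpa only [hinv] using hder.hasFDerivAt_equiv (hf' x hx)) hn
    (continuousOn_invFunOn_image hmono _ (mem_image_of_mem f hx))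
    (surjOn_image f s).rightInvOn_invFunOn (mem_image_of_mem f hx)

end Inverse

theorem exp_sub_one_sub_pos {x : ℝ} (hx : x ≠ 0) : 0 < Real.exp x - 1 - x := by
  linarith [Real.add_one_lt_exp hx]

theorem strictAntiOn_one_sub_exp_neg_div :
    StrictAntiOn (fun x : ℝ => (1 - Real.exp (-x)) / x) {0}ᶜ := by
  intro x hx y hy hxy
  have h := strictConvexOn_exp.secant_strict_mono (mem_univ 0) (mem_univ (-y)) (mem_univ (-x))
    (neg_ne_zero.2 hy) (neg_ne_zero.2 hx) (neg_lt_neg hxy)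
  have hsecant (z : ℝ) : (Real.exp (-z) - Real.exp 0) / (-z - 0) = (1 - Real.exp (-z)) / z := by
    rw [Real.exp_zero, sub_zero, ← neg_sub, neg_div_neg_eq]
  simpa only [hsecant] using h

/-- The quantity deciding, up to positive factors, both the sign of `c * θhl - q * R` at a point of
the level set with `c * R = x` and the monotonicity of `c` there. -/
noncomputable def lineMargin (θig θhl x : ℝ) : ℝ :=
  θhl * (Real.exp x - 1) - θig * x * Real.exp x

/-- The value of `c⁻¹` at the point of the level set with `c * R = x`. Passing to the inverse of `c`
makes it continuous, with value `0`, at the zero of `θig * exp x - θhl`, where `c` blows up. -/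
noncomputable def slowness (q θig θhl x : ℝ) : ℝ :=
  √((θig * Real.exp x - θhl) / (q * (Real.exp x - 1 - x)))

/-- The value of `R` at the point of the level set with `c * R = x`. -/
noncomputable def levelRadius (q θig θhl x : ℝ) : ℝ :=
  x * slowness q θig θhl x

/-- The function `φ` whose graph is the level set: `c` as a function of `R`, obtained by inverting
`levelRadius` on `(a, b]`, the range of `x = c * R` on the level set in `Q₊`. -/
noncomputable def levelSpeed (q θig θhl a b R : ℝ) : ℝ :=
  (slowness q θig θhl (Function.invFunOn (levelRadius q θig θhl) (Ioc a b) R))⁻¹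

section LevelSet

variable {q θig θhl a b x c R : ℝ}

theorem exists_lineMargin_eq_zero (hθ : 0 < θhl) (ha₀ : a ≠ 0) (ha : θig * Real.exp a = θhl) :
    ∃ b, a < b ∧ lineMargin θig θhl b = 0 := by
  have hlt : a < Real.exp a := by linarith [Real.add_one_lt_exp ha₀]
  have hleft : 0 < lineMargin θig θhl a := by
    have h : lineMargin θig θhl a = θhl * (Real.exp a - 1 - a) := by
      rw [lineMargin]
      linear_combination -a * ha
    rw [h]
    exact mul_pos hθ (exp_sub_one_sub_pos ha₀)
  have hright : lineMargin θig θhl (Real.exp a) < 0 := by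
    rw [lineMargin, ha]
    linarith
  have hcont : ContinuousOn (lineMargin θig θhl) (Icc a (Real.exp a)) := by
    unfold lineMargin
    fun_prop
  obtain ⟨b, hb, hb₀⟩ := intermediate_value_Ioo' hlt.le hcont ⟨hright, hleft⟩
  exact ⟨b, hb.1, hb₀⟩

theorem lineMargin_eq_mul_sub (hx : x ≠ 0) (hb₀ : b ≠ 0) (hb : lineMargin θig θhl b = 0) :
    lineMargin θig θhl x =
      θhl * x * Real.exp x * ((1 - Real.exp (-x)) / x - (1 - Real.exp (-b)) / b) := by
  have hslope : θig = θhl * ((1 - Real.exp (-b)) / b) := by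
    rw [lineMargin] at hb
    rw [Real.exp_neg]
    field_simp
    linarith
  rw [lineMargin, hslope, Real.exp_neg x]
  field_simp

theorem lineMargin_pos_iff (hθ : 0 < θhl) (hx : 0 < x) (hb₀ : 0 < b)
    (hb : lineMargin θig θhl b = 0) : 0 < lineMargin θig θhl x ↔ x < b := by
  rw [lineMargin_eq_mul_sub hx.ne' hb₀.ne' hb, mul_pos_iff_of_pos_left (by positivity), sub_pos]
  exact strictAntiOn_one_sub_exp_neg_div.lt_iff_gt hb₀.ne' hx.ne'

theorem lineMargin_nonneg_iff (hθ : 0 < θhl) (hx : 0 < x) (hb₀ : 0 < b)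
    (hb : lineMargin θig θhl b = 0) : 0 ≤ lineMargin θig θhl x ↔ x ≤ b := by
  rw [lineMargin_eq_mul_sub hx.ne' hb₀.ne' hb, mul_nonneg_iff_of_pos_left (by positivity),
    sub_nonneg]
  exact strictAntiOn_one_sub_exp_neg_div.le_iff_ge hb₀.ne' hx.ne'

theorem sub_mul_eq_mul_lineMargin (hG : G q θig θhl R c = 0) :
    (c * θhl - q * R) * (Real.exp (c * R) - 1 - c * R) = c * lineMargin θig θhl (c * R) := by
  rw [G] at hG
  rw [lineMargin]
  linear_combination -R * hG

theorem G_eq_zero_iff_slowness_eq (hq : 0 < q) (hc : 0 < c) (hx : c * R ≠ 0) :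
    G q θig θhl R c = 0 ↔ slowness q θig θhl (c * R) = c⁻¹ := by
  have hD := exp_sub_one_sub_pos hx
  rw [G, slowness, Real.sqrt_eq_iff_mul_self_eq_of_pos (inv_pos.2 hc), ← mul_inv, inv_eq_one_div,
    div_eq_div_iff (by positivity) (by positivity), sub_eq_zero, one_mul, mul_comm _ (c * c),
    ← sq]

theorem slowness_eq_zero (ha : θig * Real.exp a = θhl) : slowness q θig θhl a = 0 := by
  rw [slowness, ha, sub_self, zero_div, Real.sqrt_zero]

theorem slowness_pos_iff (hq : 0 < q) (hθ : 0 < θig) (ha : θig * Real.exp a = θhl) (hx : x ≠ 0) :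
    0 < slowness q θig θhl x ↔ a < x := by
  rw [slowness, Real.sqrt_pos, div_pos_iff_of_pos_right (mul_pos hq (exp_sub_one_sub_pos hx)),
    ← ha, sub_pos, mul_lt_mul_iff_right₀ hθ, Real.exp_lt_exp]

theorem continuousAt_slowness (hq : 0 < q) (hx : x ≠ 0) :
    ContinuousAt (slowness q θig θhl) x := by
  have hD := (mul_pos hq (exp_sub_one_sub_pos hx)).ne'
  unfold slowness
  fun_prop (disch := assumption)

theorem contDiffAt_slowness {n : WithTop ℕ∞} (hq : 0 < q) (hx : x ≠ 0)
    (hs : 0 < slowness q θig θhl x) : ContDiffAt ℝ n (slowness q θig θhl) x := by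
  have hD := (mul_pos hq (exp_sub_one_sub_pos hx)).ne'
  have hN := (Real.sqrt_pos.1 hs).ne'
  unfold slowness
  fun_prop (disch := assumption)

theorem hasDerivAt_slowness (hq : 0 < q) (hx : x ≠ 0) (hs : 0 < slowness q θig θhl x) :
    HasDerivAt (slowness q θig θhl) (lineMargin θig θhl x /
      (q * (Real.exp x - 1 - x) ^ 2) / (2 * slowness q θig θhl x)) x := by
  have hD := exp_sub_one_sub_pos hx
  have hnum : HasDerivAt (fun x => θig * Real.exp x - θhl) (θig * Real.exp x) x :=
    ((Real.hasDerivAt_exp x).const_mul θig).sub_const θhl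
  have hden : HasDerivAt (fun x => q * (Real.exp x - 1 - x)) (q * (Real.exp x - 1)) x :=
    (((Real.hasDerivAt_exp x).sub_const 1).sub (hasDerivAt_id x)).const_mul q
  convert! (hnum.div hden (mul_pos hq hD).ne').sqrt (Real.sqrt_pos.1 hs).ne' using 2
  rw [lineMargin]
  field_simp
  ring

theorem strictMonoOn_slowness (hq : 0 < q) (hθ : 0 < θig) (ha₀ : 0 < a)
    (ha : θig * Real.exp a = θhl) (hb : lineMargin θig θhl b = 0) :
    StrictMonoOn (slowness q θig θhl) (Icc a b) := by
  refine strictMonoOn_of_deriv_pos (convex_Icc a b) (fun x hx => ?_) (fun x hx => ?_)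
  · exact (continuousAt_slowness hq (ha₀.trans_le hx.1).ne').continuousWithinAt
  · rw [interior_Icc] at hx
    have hx₀ : 0 < x := ha₀.trans hx.1
    have hs : 0 < slowness q θig θhl x := (slowness_pos_iff hq hθ ha hx₀.ne').2 hx.1
    have hD := exp_sub_one_sub_pos hx₀.ne'
    have hm : 0 < lineMargin θig θhl x :=
      (lineMargin_pos_iff (ha ▸ by positivity) hx₀ (hx₀.trans hx.2) hb).2 hx.2
    rw [(hasDerivAt_slowness hq hx₀.ne' hs).deriv]
    positivity

theorem levelRadius_eq_zero (ha : θig * Real.exp a = θhl) : levelRadius q θig θhl a = 0 := by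
  rw [levelRadius, slowness_eq_zero ha, mul_zero]

theorem inv_slowness_mul_levelRadius (hs : slowness q θig θhl x ≠ 0) :
    (slowness q θig θhl x)⁻¹ * levelRadius q θig θhl x = x := by
  rw [levelRadius, mul_left_comm, inv_mul_cancel₀ hs, mul_one]

theorem strictMonoOn_levelRadius (hq : 0 < q) (hθ : 0 < θig) (ha₀ : 0 < a)
    (ha : θig * Real.exp a = θhl) (hb : lineMargin θig θhl b = 0) :
    StrictMonoOn (levelRadius q θig θhl) (Icc a b) := fun _ hx _ hy hxy =>
  mul_lt_mul'' hxy (strictMonoOn_slowness hq hθ ha₀ ha hb hx hy hxy) (ha₀.le.trans hx.1)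
    (Real.sqrt_nonneg _)

theorem image_levelRadius (hq : 0 < q) (hθ : 0 < θig) (ha₀ : 0 < a) (hab : a ≤ b)
    (ha : θig * Real.exp a = θhl) (hb : lineMargin θig θhl b = 0) :
    levelRadius q θig θhl '' Ioc a b = Ioc 0 (levelRadius q θig θhl b) := by
  have hcont : ContinuousOn (levelRadius q θig θhl) (Icc a b) := fun x hx =>
    (continuousAt_id.mul
      (continuousAt_slowness hq (ha₀.trans_le hx.1).ne')).continuousWithinAt
  rw [← levelRadius_eq_zero (q := q) ha]
  exact (strictMonoOn_levelRadius hq hθ ha₀ ha hb).image_Ioc_subset.antisymm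
    (intermediate_value_Ioc hab hcont)

theorem deriv_levelRadius_pos (hq : 0 < q) (hx : 0 < x) (hs : 0 < slowness q θig θhl x)
    (hm : 0 ≤ lineMargin θig θhl x) : 0 < deriv (levelRadius q θig θhl) x := by
  have hD := exp_sub_one_sub_pos hx.ne'
  have hder := (hasDerivAt_id x).mul (hasDerivAt_slowness hq hx.ne' hs)
  rw [show levelRadius q θig θhl = id * slowness q θig θhl from rfl, hder.deriv, id]
  positivity

theorem levelSet_iff_exists (hq : 0 < q) (hθ : 0 < θig) (ha₀ : 0 < a) (hab : a < b)
    (ha : θig * Real.exp a = θhl) (hb : lineMargin θig θhl b = 0) :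
    0 < R ∧ q * R ≤ c * θhl ∧ G q θig θhl R c = 0 ↔
      ∃ x ∈ Ioc a b, levelRadius q θig θhl x = R ∧ (slowness q θig θhl x)⁻¹ = c := by
  have hθhl : 0 < θhl := ha ▸ by positivity
  have hconstraint (hc : 0 < c) (hR : 0 < R) (hG : G q θig θhl R c = 0) :
      q * R ≤ c * θhl ↔ c * R ≤ b := by
    have hx : 0 < c * R := mul_pos hc hR
    rw [← sub_nonneg, ← mul_nonneg_iff_of_pos_right (exp_sub_one_sub_pos hx.ne'),
      sub_mul_eq_mul_lineMargin hG, mul_nonneg_iff_of_pos_left hc,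
      lineMargin_nonneg_iff hθhl hx (ha₀.trans hab) hb]
  constructor
  · rintro ⟨hR, hle, hG⟩
    have hc : 0 < c := pos_of_mul_pos_left ((mul_pos hq hR).trans_le hle) hθhl.le
    have hx : c * R ≠ 0 := (mul_pos hc hR).ne'
    have hs : slowness q θig θhl (c * R) = c⁻¹ := (G_eq_zero_iff_slowness_eq hq hc hx).1 hG
    refine ⟨c * R, ⟨?_, (hconstraint hc hR hG).1 hle⟩, ?_, ?_⟩
    · rw [← slowness_pos_iff hq hθ ha hx, hs]
      exact inv_pos.2 hc
    · rw [levelRadius, hs]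
      field_simp
    · rw [hs, inv_inv]
  · rintro ⟨x, hx, rfl, rfl⟩
    have hx₀ : 0 < x := ha₀.trans hx.1
    have hs : 0 < slowness q θig θhl x := (slowness_pos_iff hq hθ ha hx₀.ne').2 hx.1
    have hcR := inv_slowness_mul_levelRadius hs.ne'
    have hG : G q θig θhl (levelRadius q θig θhl x) (slowness q θig θhl x)⁻¹ = 0 := by
      rw [G_eq_zero_iff_slowness_eq hq (inv_pos.2 hs) (hcR.symm ▸ hx₀.ne'), hcR, inv_inv]
    have hR : 0 < levelRadius q θig θhl x := mul_pos hx₀ hs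
    exact ⟨hR, (hconstraint (inv_pos.2 hs) hR hG).2 (hcR.symm ▸ hx.2), hG⟩

theorem levelSpeed_levelRadius (hq : 0 < q) (hθ : 0 < θig) (ha₀ : 0 < a)
    (ha : θig * Real.exp a = θhl) (hb : lineMargin θig θhl b = 0) (hx : x ∈ Ioc a b) :
    levelSpeed q θig θhl a b (levelRadius q θig θhl x) = (slowness q θig θhl x)⁻¹ := by
  have hinj : InjOn (levelRadius q θig θhl) (Ioc a b) :=
    ((strictMonoOn_levelRadius hq hθ ha₀ ha hb).mono Ioc_subset_Icc_self).injOn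
  rw [levelSpeed, hinj.leftInvOn_invFunOn hx]

theorem levelSet_iff_levelSpeed_eq (hq : 0 < q) (hθ : 0 < θig) (ha₀ : 0 < a) (hab : a < b)
    (ha : θig * Real.exp a = θhl) (hb : lineMargin θig θhl b = 0) :
    0 < R ∧ q * R ≤ c * θhl ∧ G q θig θhl R c = 0 ↔
      R ∈ Ioc 0 (levelRadius q θig θhl b) ∧ levelSpeed q θig θhl a b R = c := by
  rw [levelSet_iff_exists hq hθ ha₀ hab ha hb, ← image_levelRadius hq hθ ha₀ hab.le ha hb]
  constructor
  · rintro ⟨x, hx, rfl, rfl⟩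
    exact ⟨mem_image_of_mem _ hx, levelSpeed_levelRadius hq hθ ha₀ ha hb hx⟩
  · rintro ⟨⟨x, hx, rfl⟩, rfl⟩
    exact ⟨x, hx, rfl, (levelSpeed_levelRadius hq hθ ha₀ ha hb hx).symm⟩

theorem levelSpeed_mul_eq_mul_levelRadius (hq : 0 < q) (hθ : 0 < θig) (ha₀ : 0 < a) (hab : a < b)
    (ha : θig * Real.exp a = θhl) (hb : lineMargin θig θhl b = 0) :
    levelSpeed q θig θhl a b (levelRadius q θig θhl b) * θhl = q * levelRadius q θig θhl b := by
  have hb₀ : 0 < b := ha₀.trans hab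
  have hs : 0 < slowness q θig θhl b := (slowness_pos_iff hq hθ ha hb₀.ne').2 hab
  have hG := ((levelSet_iff_exists hq hθ ha₀ hab ha hb).2
    ⟨b, right_mem_Ioc.2 hab, rfl, rfl⟩).2.2
  have h := sub_mul_eq_mul_lineMargin hG
  rw [inv_slowness_mul_levelRadius hs.ne', hb, mul_zero,
    mul_eq_zero_iff_right (exp_sub_one_sub_pos hb₀.ne').ne'] at h
  rw [levelSpeed_levelRadius hq hθ ha₀ ha hb (right_mem_Ioc.2 hab)]
  exact sub_eq_zero.1 h

theorem contDiffOn_levelSpeed {n : WithTop ℕ∞} (hn : n ≠ 0) (hq : 0 < q) (hθ : 0 < θig)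
    (ha₀ : 0 < a) (hab : a ≤ b) (ha : θig * Real.exp a = θhl) (hb : lineMargin θig θhl b = 0) :
    ContDiffOn ℝ n (levelSpeed q θig θhl a b) (Ioc 0 (levelRadius q θig θhl b)) := by
  have hpos {x : ℝ} (hx : x ∈ Ioc a b) : 0 < x := ha₀.trans hx.1
  have hs {x : ℝ} (hx : x ∈ Ioc a b) : 0 < slowness q θig θhl x :=
    (slowness_pos_iff hq hθ ha (hpos hx).ne').2 hx.1
  have hsmooth {x : ℝ} (hx : x ∈ Ioc a b) : ContDiffAt ℝ n (slowness q θig θhl) x :=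
    contDiffAt_slowness hq (hpos hx).ne' (hs hx)
  have hinv : ContDiffOn ℝ n (Function.invFunOn (levelRadius q θig θhl) (Ioc a b))
      (levelRadius q θig θhl '' Ioc a b) := by
    refine contDiffOn_invFunOn_image
      ((strictMonoOn_levelRadius hq hθ ha₀ ha hb).mono Ioc_subset_Icc_self)
      (fun x hx => contDiffAt_id.mul (hsmooth hx)) hn (fun x hx => ?_)
    exact (deriv_levelRadius_pos hq (hpos hx) (hs hx) ((lineMargin_nonneg_iff
      (ha ▸ by positivity) (hpos hx) (ha₀.trans_le hab) hb).2 hx.2)).ne'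
  have hspeed : ContDiffOn ℝ n (fun x => (slowness q θig θhl x)⁻¹) (Ioc a b) := fun x hx =>
    ((hsmooth hx).inv (hs hx).ne').contDiffWithinAt
  rw [← image_levelRadius hq hθ ha₀ hab ha hb]
  exact hspeed.comp hinv (surjOn_image _ _).mapsTo_invFunOn

theorem strictAntiOn_levelSpeed (hq : 0 < q) (hθ : 0 < θig) (ha₀ : 0 < a) (hab : a ≤ b)
    (ha : θig * Real.exp a = θhl) (hb : lineMargin θig θhl b = 0) :
    StrictAntiOn (levelSpeed q θig θhl a b) (Ioc 0 (levelRadius q θig θhl b)) := by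
  rw [← image_levelRadius hq hθ ha₀ hab ha hb]
  rintro _ ⟨x, hx, rfl⟩ _ ⟨y, hy, rfl⟩ hxy
  have hx' : x ∈ Icc a b := Ioc_subset_Icc_self hx
  have hy' : y ∈ Icc a b := Ioc_subset_Icc_self hy
  rw [levelSpeed_levelRadius hq hθ ha₀ ha hb hx, levelSpeed_levelRadius hq hθ ha₀ ha hb hy]
  have hlt : x < y := ((strictMonoOn_levelRadius hq hθ ha₀ ha hb).lt_iff_lt hx' hy').1 hxy
  exact inv_strictAnti₀ ((slowness_pos_iff hq hθ ha (ha₀.trans hx.1).ne').2 hx.1)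
    (strictMonoOn_slowness hq hθ ha₀ ha hb hx' hy' hlt)

theorem tendsto_levelSpeed_nhdsGT_zero (hq : 0 < q) (hθ : 0 < θig) (ha₀ : 0 < a) (hab : a < b)
    (ha : θig * Real.exp a = θhl) (hb : lineMargin θig θhl b = 0) :
    Tendsto (levelSpeed q θig θhl a b) (nhdsWithin 0 (Ioi 0)) atTop := by
  have hb₀ : 0 < b := ha₀.trans hab
  have hR₀ : 0 < levelRadius q θig θhl b :=
    mul_pos hb₀ ((slowness_pos_iff hq hθ ha hb₀.ne').2 hab)
  refine tendsto_atTop_mono' _ ?_ (tendsto_inv_nhdsGT_zero.const_mul_atTop ha₀)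
  filter_upwards [Ioc_mem_nhdsGT hR₀] with R hR
  rw [← image_levelRadius hq hθ ha₀ hab.le ha hb] at hR
  obtain ⟨x, hx, rfl⟩ := hR
  have hx₀ : 0 < x := ha₀.trans hx.1
  have hs : 0 < slowness q θig θhl x := (slowness_pos_iff hq hθ ha hx₀.ne').2 hx.1
  rw [levelSpeed_levelRadius hq hθ ha₀ ha hb hx]
  calc a * (levelRadius q θig θhl x)⁻¹ ≤ x * (levelRadius q θig θhl x)⁻¹ :=
        mul_le_mul_of_nonneg_right hx.1.le (inv_nonneg.2 (mul_pos hx₀ hs).le)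
    _ = (slowness q θig θhl x)⁻¹ := by
        rw [levelRadius]
        field_simp

end LevelSet

/-- The level set `{G = 0}` inside `Q₊` is the graph of a smooth decreasing function
`φ : (0, R₀] → ℝ` with right endpoint `(R₀, c₀)` on the line `cθ_hl = qR` and the
axis `R = 0` as asymptote on the left. -/
theorem stmt1 (q θig θhl : ℝ) (hq : 0 < q) (h1 : 0 < θig) (h2 : θig < θhl) :
    ∃ R₀ c₀ : ℝ, 0 < R₀ ∧ 0 < c₀ ∧ c₀ * θhl = q * R₀ ∧ G q θig θhl R₀ c₀ = 0 ∧
      ∃ φ : ℝ → ℝ,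
        ContDiffOn ℝ (⊤ : ℕ∞) φ (Ioc 0 R₀) ∧
        StrictAntiOn φ (Ioc 0 R₀) ∧
        φ R₀ = c₀ ∧
        Tendsto φ (nhdsWithin 0 (Ioi 0)) atTop ∧
        (∀ R ∈ Ioc (0 : ℝ) R₀, q * R ≤ φ R * θhl ∧ G q θig θhl R (φ R) = 0) ∧
        (∀ R c : ℝ, 0 < R → q * R ≤ c * θhl → G q θig θhl R c = 0 →
          R ≤ R₀ ∧ c = φ R) := by
  obtain ⟨a, ha₀, ha⟩ : ∃ a, 0 < a ∧ θig * Real.exp a = θhl :=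
    ⟨Real.log (θhl / θig), Real.log_pos ((one_lt_div h1).2 h2), by
      rw [Real.exp_log (div_pos (h1.trans h2) h1), mul_div_cancel₀ _ h1.ne']⟩
  obtain ⟨b, hab, hb⟩ := exists_lineMargin_eq_zero (h1.trans h2) ha₀.ne' ha
  have hlevel {R c : ℝ} := levelSet_iff_levelSpeed_eq (R := R) (c := c) hq h1 ha₀ hab ha hb
  have hline := levelSpeed_mul_eq_mul_levelRadius hq h1 ha₀ hab ha hb
  set R₀ := levelRadius q θig θhl b
  set φ := levelSpeed q θig θhl a b
  have hR₀ : 0 < R₀ :=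
    mul_pos (ha₀.trans hab) ((slowness_pos_iff hq h1 ha (ha₀.trans hab).ne').2 hab)
  have hc₀ : 0 < φ R₀ :=
    pos_of_mul_pos_left (hline ▸ mul_pos hq hR₀) (h1.trans h2).le
  refine ⟨R₀, φ R₀, hR₀, hc₀, hline, (hlevel.2 ⟨right_mem_Ioc.2 hR₀, rfl⟩).2.2, φ,
    contDiffOn_levelSpeed (by simp) hq h1 ha₀ hab.le ha hb,
    strictAntiOn_levelSpeed hq h1 ha₀ hab.le ha hb, rfl,
    tendsto_levelSpeed_nhdsGT_zero hq h1 ha₀ hab ha hb,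
    fun R hR => (hlevel.2 ⟨hR, rfl⟩).2, fun R c hR hle hG => ?_⟩
  obtain ⟨hRmem, hφ⟩ := hlevel.1 ⟨hR, hle, hG⟩
  exact ⟨hRmem.2, hφ.symm⟩
end

section
/- There exists a function ψ : [0, +∞) → ℝ with the following properties: (a) ψ is C^∞ and strictly increasing, with ψ(0) > 0, mapping [0, +∞) diffeomorphically onto [ψ(0), +∞); (b) for every R ≥ 0 and c > 0, one has c = ψ(R) if and only if there exists a twice continuously differentiable function θ : [R, +∞) → ℝ with θ'' − c·θ' + F(θ) = 0 on [R, +∞), θ(R) = θ_hl, θ'(R) = c·θ_hl − q·R, θ'(x) > 0 for all x ≥ R, and θ(x) → θ₊ as x → +∞; (c) for every R ≥ 0, q·R/θ_hl < ψ(R) < c₊(R) where c₊(R) = (1/θ_hl)·(√(2·∫_{θ_hl}^{θ₊} F(u) du) + q·R); (d) ψ(R) − q·R/θ_hl → 0 as R → +∞, i.e. the line c = qR/θ_hl is an asymptote of the graph of ψ. -/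
open Set Filter

/-!
In the phase plane, the monotone connections at speed `c` run along the branch `v = V_c(s)`,
`s = θ₊ - u`, of the stable manifold of the saddle, so everything reduces to the slope
`h(c) = V_c(θ₊ - θ_hl)` at which this branch crosses the level `θ_hl`: there is a connection with
slope `c θ_hl - q R` exactly when `c θ_hl - q R = h(c)`, and `ψ` is the inverse of
`c ↦ (c θ_hl - h(c)) / q`.

Writing `F(θ₊ - s) = s G(s)` and `V_c(s) = s Z_c(s)`, the branch is the regular positive solution
of the singular equation `(s Z)' = G / Z - c`. Adding `n Z` to both sides and inverting the left
hand side by a weighted Hardy average makes this, for large `n`, a contraction on bounded continuous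
functions bounded away from `0`, which depends analytically on `(c, Z)`. Hence `Z_c` exists and
depends analytically on `c`, by the implicit function theorem. Comparison of solutions shows that
`h` is positive and strictly decreasing and that `c h(c)` is bounded, which gives the monotonicity
of `ψ`, the lower bound and the asymptote; for `c = 0` the equation integrates to
`h(0)² = 2 ∫ F`, which gives the upper bound.
-/

open scoped BoundedContinuousFunction ContDiff Topology

/-! ### Fixed points of contractions with parameters -/

section FixedPointDependence

variable {P X : Type*} [NormedAddCommGroup P] [NormedSpace ℝ P] [CompleteSpace P]
  [NormedAddCommGroup X] [NormedSpace ℝ X] [CompleteSpace X]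

theorem isInvertible_id_sub_of_norm_lt_one {K : X →L[ℝ] X} (hK : ‖K‖ < 1) :
    (ContinuousLinearMap.id ℝ X - K).IsInvertible := by
  obtain ⟨u, hu⟩ := isUnit_one_sub_of_norm_lt_one (R := X →L[ℝ] X) hK
  exact ⟨ContinuousLinearEquiv.unitsEquiv ℝ X u, hu⟩

theorem exists_contDiffAt_fixedPoint {n : ℕ∞ω} (hn : n ≠ 0) {T : P × X → X} {p₀ : P} {x₀ : X}
    (hT : ContDiffAt ℝ n T (p₀, x₀)) (hfix : T (p₀, x₀) = x₀) {K : NNReal} (hK : K < 1)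
    {S : Set X} (hS : S ∈ 𝓝 x₀) (hlip : LipschitzOnWith K (fun x => T (p₀, x)) S) :
    ∃ Y : P → X, ContDiffAt ℝ n Y p₀ ∧ Y p₀ = x₀ ∧ ∀ᶠ p in 𝓝 p₀, T (p, Y p) = Y p := by
  have hΦ : ContDiffAt ℝ n (fun p : P × X => p.2 - T p) (p₀, x₀) := contDiffAt_snd.sub hT
  have hpartial : HasFDerivAt (fun x => T (p₀, x)) (fderiv ℝ T (p₀, x₀) ∘L .inr ℝ P X) x₀ :=
    (hT.differentiableAt hn).hasFDerivAt.comp x₀ (hasFDerivAt_prodMk_right p₀ x₀)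
  have hinv : (fderiv ℝ (fun p : P × X => p.2 - T p) (p₀, x₀) ∘L .inr ℝ P X).IsInvertible := by
    rw [fderiv_fun_sub differentiableAt_snd (hT.differentiableAt hn), fderiv_snd,
      ContinuousLinearMap.sub_comp, ContinuousLinearMap.snd_comp_inr]
    exact isInvertible_id_sub_of_norm_lt_one
      ((hpartial.le_of_lipschitzOn hS hlip).trans_lt (mod_cast hK))
  refine ⟨hΦ.implicitFunction hn hinv, hΦ.contDiffAt_implicitFunction hn hinv,
    hΦ.implicitFunction_apply_self hn hinv, ?_⟩
  filter_upwards [hΦ.eventually_apply_implicitFunction hn hinv] with p hp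
  rw [hfix, sub_self, sub_eq_zero] at hp
  exact hp.symm

end FixedPointDependence

/-! ### Real functions of one variable -/

theorem nonpos_of_hasDerivAt_neg_of_pos {E E' : ℝ → ℝ} {a s : ℝ} (hs : a < s)
    (hcont : ContinuousWithinAt E (Ioi a) a) (ha : E a ≤ 0)
    (hderiv : ∀ r, a < r → HasDerivAt E (E' r) r) (hneg : ∀ r, a < r → 0 < E r → E' r < 0) :
    E s ≤ 0 := by
  refine le_of_forall_pos_le_add fun ε hε => ?_
  rw [zero_add]
  obtain ⟨δ, hEδ, hδ⟩ : ∃ δ, E δ < ε ∧ δ ∈ Ioo a s :=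
    ((hcont.tendsto.eventually_lt_const (ha.trans_lt hε)).and (Ioo_mem_nhdsGT hs)).exists
  have hpos : ∀ r ∈ Icc δ s, a < r := fun r hr => hδ.1.trans_le hr.1
  refine image_le_of_deriv_right_lt_deriv_boundary (B := fun _ => ε) (B' := fun _ => 0)
    (fun r hr => (hderiv r (hpos r hr)).continuousAt.continuousWithinAt)
    (fun r hr => (hderiv r (hpos r (Ico_subset_Icc_self hr))).hasDerivWithinAt) hEδ.le
    (fun r => hasDerivAt_const r ε) (fun r hr hr' => ?_) (right_mem_Icc.2 hδ.2.le)
  exact hneg r (hpos r (Ico_subset_Icc_self hr)) (hr' ▸ hε)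

theorem exists_orderIso_of_le_deriv {f f' : ℝ → ℝ} {m : ℝ} (hm : 0 < m)
    (hf : ∀ x, HasDerivAt f (f' x) x) (hf' : ∀ x, m ≤ f' x) : ∃ e : ℝ ≃o ℝ, ⇑e = f := by
  have hdiff : Differentiable ℝ f := fun x => (hf x).differentiableAt
  have hgrowth := mul_sub_le_image_sub_of_le_deriv hdiff fun x => (hf x).deriv ▸ hf' x
  have htop : Tendsto f atTop atTop := by
    refine tendsto_atTop_mono' atTop ?_
      (tendsto_atTop_add_const_right atTop (f 0) (tendsto_id.const_mul_atTop hm))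
    filter_upwards [eventually_ge_atTop 0] with x hx
    simpa [le_sub_iff_add_le] using hgrowth hx
  have hbot : Tendsto f atBot atBot := by
    refine tendsto_atBot_mono' atBot ?_
      (tendsto_atBot_add_const_right atBot (f 0) (tendsto_id.const_mul_atBot hm))
    filter_upwards [eventually_le_atBot 0] with x hx
    have := hgrowth hx
    simp only [id]
    linarith
  have hmono : StrictMono f := strictMono_of_deriv_pos fun x => by
    rw [(hf x).deriv]
    exact hm.trans_le (hf' x)
  exact ⟨hmono.orderIsoOfSurjective f (hdiff.continuous.surjective htop hbot), rfl⟩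

theorem hasDerivAt_orderIso_symm {e : ℝ ≃o ℝ} {e' y : ℝ} (he : HasDerivAt e e' (e.symm y))
    (he' : e' ≠ 0) : HasDerivAt e.symm e'⁻¹ y :=
  he.of_local_left_inverse e.symm.continuous.continuousAt he'
    (Eventually.of_forall e.apply_symm_apply)

theorem exists_seq_tendsto_deriv_zero {f f' : ℝ → ℝ} {l : ℝ}
    (hf : ∀ᶠ x in atTop, HasDerivAt f (f' x) x) (hl : Tendsto f atTop (𝓝 l)) :
    ∃ ξ : ℕ → ℝ, Tendsto ξ atTop atTop ∧ Tendsto (fun k => f' (ξ k)) atTop (𝓝 0) := by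
  obtain ⟨A, hA⟩ := eventually_atTop.1 hf
  have hslope : ∀ k : ℕ, ∃ ξ ∈ Ioo (A + k) (A + k + 1), f' ξ = f (A + k + 1) - f (A + k) := by
    intro k
    have hderiv : ∀ x ∈ Icc (A + k) (A + k + 1), HasDerivAt f (f' x) x := fun x hx =>
      hA x ((le_add_of_nonneg_right k.cast_nonneg).trans hx.1)
    obtain ⟨ξ, hξ, hslope⟩ := exists_hasDerivAt_eq_slope f f' (lt_add_one (A + k))
      (fun x hx => (hderiv x hx).continuousAt.continuousWithinAt)
      fun x hx => hderiv x (Ioo_subset_Icc_self hx)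
    exact ⟨ξ, hξ, by rw [hslope, add_sub_cancel_left, div_one]⟩
  choose ξ hξ hslope using hslope
  have htop : Tendsto (fun k : ℕ => A + k) atTop atTop :=
    tendsto_atTop_add_const_left atTop A tendsto_natCast_atTop_atTop
  refine ⟨ξ, tendsto_atTop_mono (fun k => (hξ k).1.le) htop, ?_⟩
  simp only [hslope]
  rw [← sub_self l]
  exact (hl.comp (tendsto_atTop_add_const_right atTop 1 htop)).sub (hl.comp htop)

theorem eq_zero_of_hasDerivWithinAt_mul {D k : ℝ → ℝ} {R : ℝ} (hk : ∀ x ∈ Ici R, 0 ≤ k x)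
    (hD : ∀ x ∈ Ici R, HasDerivWithinAt D (k x * D x) (Ici R) x) {ξ : ℕ → ℝ}
    (hξ : Tendsto ξ atTop atTop) (hDξ : Tendsto (fun n => D (ξ n)) atTop (𝓝 0)) : D R = 0 := by
  have hderiv : ∀ x ∈ Ici R,
      HasDerivWithinAt (fun x => D x ^ 2) (2 * (k x * D x ^ 2)) (Ici R) x := fun x hx =>
    ((hD x hx).fun_pow 2).congr_deriv (by norm_num; ring)
  have hmono : MonotoneOn (fun x => D x ^ 2) (Ici R) :=
    monotoneOn_of_hasDerivWithinAt_nonneg (convex_Ici R)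
      (fun x hx => (hderiv x hx).continuousWithinAt)
      (fun x hx => (hderiv x (interior_subset hx)).mono interior_subset)
      fun x hx => mul_nonneg zero_le_two (mul_nonneg (hk x (interior_subset hx)) (sq_nonneg _))
  have hle : D R ^ 2 ≤ 0 := by
    refine ge_of_tendsto (by simpa using hDξ.pow 2) ?_
    filter_upwards [hξ.eventually_ge_atTop R] with n hn
    exact hmono self_mem_Ici hn hn
  exact pow_eq_zero_iff two_ne_zero |>.1 (hle.antisymm (sq_nonneg _))

theorem exists_continuousOn_sub_mul_eq {f : ℝ → ℝ} {f' x₀ : ℝ} {s : Set ℝ}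
    (hf : ContinuousOn f s) (hf₀ : f x₀ = 0) (hf' : HasDerivWithinAt f f' s x₀) :
    ∃ k : ℝ → ℝ, ContinuousOn k s ∧ k x₀ = f' ∧ ∀ x, f x = (x - x₀) * k x := by
  refine ⟨Function.update (slope f x₀) x₀ f', ?_, Function.update_self .., fun x => ?_⟩
  · rw [continuousOn_update_iff]
    refine ⟨?_, fun _ => hasDerivWithinAt_iff_tendsto_slope.1 hf'⟩
    simp only [slope_fun_def, hf₀]
    exact ((continuousOn_id.sub continuousOn_const).inv₀ fun x hx => sub_ne_zero.2 hx.2).smul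
      ((hf.mono sdiff_subset).sub continuousOn_const)
  · rcases eq_or_ne x x₀ with rfl | hx
    · rw [hf₀, sub_self, zero_mul]
    · rw [Function.update_of_ne hx, ← smul_eq_mul, sub_smul_slope, vsub_eq_sub, hf₀, sub_zero]

section BoundedContinuousFunctions

variable {α : Type*} [TopologicalSpace α] {Z : α →ᵇ ℝ}

theorem isUnit_of_forall_le {m : ℝ} (hm : 0 < m) (hZ : ∀ s, m ≤ Z s) : IsUnit Z := by
  have hpos : ∀ s, 0 < Z s := fun s => hm.trans_le (hZ s)
  let V : α →ᵇ ℝ := BoundedContinuousFunction.ofNormedAddCommGroup (fun s => (Z s)⁻¹)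
    (Z.continuous.inv₀ fun s => (hpos s).ne') m⁻¹ fun s => by
      rw [norm_inv, Real.norm_of_nonneg (hpos s).le]
      exact inv_anti₀ hm (hZ s)
  refine IsUnit.of_mul_eq_one V ?_
  ext s
  exact mul_inv_cancel₀ (hpos s).ne'

theorem ringInverse_apply_of_isUnit (hZ : IsUnit Z) (s : α) : Ring.inverse Z s = (Z s)⁻¹ :=
  eq_inv_of_mul_eq_one_right (DFunLike.congr_fun (Ring.mul_inverse_cancel Z hZ) s)

theorem exists_boundedContinuousFunction_eqOn_Icc {g : ℝ → ℝ} {x y : ℝ} (hxy : x ≤ y)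
    (hg : ContinuousOn g (Icc x y)) (hpos : ∀ s ∈ Icc x y, 0 < g s) :
    ∃ (G : ℝ →ᵇ ℝ) (a : ℝ), 0 < a ∧ (∀ s, a ≤ G s) ∧ EqOn G g (Icc x y) := by
  obtain ⟨t, ht, hmin⟩ := isCompact_Icc.exists_isMinOn (nonempty_Icc.2 hxy) hg
  let G : ℝ →ᵇ ℝ := (BoundedContinuousFunction.mkOfCompact ⟨_, hg.domRestrict⟩).compContinuous
    ⟨projIcc x y hxy, continuous_projIcc⟩
  refine ⟨G, g t, hpos t ht, fun s => hmin (projIcc x y hxy s).2, fun s hs => ?_⟩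
  exact congrArg (domRestrict (Icc x y) g) (projIcc_of_mem hxy hs)

end BoundedContinuousFunctions

/-! ### Weighted Hardy averages -/

theorem integral_succ_mul_pow_mul_mem_Icc (n : ℕ) {f : ℝ → ℝ} (hf : Continuous f) {x y : ℝ}
    (h : ∀ t, f t ∈ Icc x y) : ∫ t in (0 : ℝ)..1, (n + 1) * t ^ n * f t ∈ Icc x y := by
  have hconst : ∀ z : ℝ, ∫ t in (0 : ℝ)..1, (n + 1) * t ^ n * z = z := fun z => by
    rw [intervalIntegral.integral_mul_const, intervalIntegral.integral_const_mul, integral_pow]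
    field_simp
    simp
  have hle : ∀ {g₁ g₂ : ℝ → ℝ}, Continuous g₁ → Continuous g₂ → (∀ t, g₁ t ≤ g₂ t) →
      ∫ t in (0 : ℝ)..1, (n + 1) * t ^ n * g₁ t ≤ ∫ t in (0 : ℝ)..1, (n + 1) * t ^ n * g₂ t :=
    fun hg₁ hg₂ hg => intervalIntegral.integral_mono_on zero_le_one
      (Continuous.intervalIntegrable (by fun_prop) _ _)
      (Continuous.intervalIntegrable (by fun_prop) _ _) fun t ht =>
        mul_le_mul_of_nonneg_left (hg t) (mul_nonneg (by positivity) (pow_nonneg ht.1 n))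
  exact ⟨(hconst x).ge.trans (hle continuous_const hf fun t => (h t).1),
    (hle hf continuous_const fun t => (h t).2).trans (hconst y).le⟩

/-- The weighted Hardy averaging operator
`f ↦ (s ↦ (n + 1) / s ^ (n + 1) * ∫ t in 0..s, t ^ n * f t)`, written as an average over dilations
of `f` so that its value at `s = 0` is `f 0`. It inverts `f ↦ ((s f)' + n f) / (n + 1)`. -/
noncomputable def hardyAverage (n : ℕ) : (ℝ →ᵇ ℝ) →L[ℝ] (ℝ →ᵇ ℝ) :=
  have norm_le (f : ℝ →ᵇ ℝ) (s : ℝ) :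
      ‖∫ t in (0 : ℝ)..1, (n + 1) * t ^ n * f (t * s)‖ ≤ ‖f‖ :=
    abs_le.2 <| integral_succ_mul_pow_mul_mem_Icc n (f := fun t => f (t * s)) (by fun_prop)
      fun t => abs_le.1 (f.norm_coe_le_norm (t * s))
  LinearMap.mkContinuous
    { toFun := fun f => BoundedContinuousFunction.ofNormedAddCommGroup
        (fun s => ∫ t in (0 : ℝ)..1, (n + 1) * t ^ n * f (t * s))
        (intervalIntegral.continuous_parametric_intervalIntegral_of_continuous'
          (by simp only [Function.uncurry_def]; fun_prop) 0 1) ‖f‖ (norm_le f)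
      map_add' := fun f g => by
        ext s
        simp only [BoundedContinuousFunction.coe_ofNormedAddCommGroup,
          BoundedContinuousFunction.add_apply, mul_add]
        exact intervalIntegral.integral_add (Continuous.intervalIntegrable (by fun_prop) _ _)
          (Continuous.intervalIntegrable (by fun_prop) _ _)
      map_smul' := fun r f => by
        ext s
        simp only [BoundedContinuousFunction.coe_ofNormedAddCommGroup,
          BoundedContinuousFunction.smul_apply, smul_eq_mul, RingHom.id_apply,
          mul_left_comm _ r, intervalIntegral.integral_const_mul] }
    1 fun f => by
      rw [one_mul, BoundedContinuousFunction.norm_le (norm_nonneg f)]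
      exact norm_le f

section HardyAverage

variable (n : ℕ) (f : ℝ →ᵇ ℝ)

theorem hardyAverage_apply (s : ℝ) :
    hardyAverage n f s = ∫ t in (0 : ℝ)..1, (n + 1) * t ^ n * f (t * s) := rfl

theorem norm_hardyAverage_le : ‖hardyAverage n‖ ≤ 1 := by
  unfold hardyAverage
  exact LinearMap.mkContinuous_norm_le _ zero_le_one _

variable {f} in
theorem hardyAverage_mem_Icc {x y : ℝ} (h : ∀ s, f s ∈ Icc x y) (s : ℝ) :
    hardyAverage n f s ∈ Icc x y :=
  integral_succ_mul_pow_mul_mem_Icc n (by fun_prop) fun t => h (t * s)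

theorem pow_succ_mul_hardyAverage (s : ℝ) :
    s ^ (n + 1) * hardyAverage n f s = ∫ t in (0 : ℝ)..s, (n + 1) * t ^ n * f t := by
  have hsubst := intervalIntegral.smul_integral_comp_mul_right (a := 0) (b := 1)
    (fun t => (n + 1) * t ^ n * f t) s
  simp only [zero_mul, one_mul, smul_eq_mul, mul_pow] at hsubst
  rw [← hsubst, hardyAverage_apply, pow_succ', mul_assoc, ← intervalIntegral.integral_const_mul]
  refine congrArg (s * ·) (intervalIntegral.integral_congr fun t _ => ?_)
  ring

theorem hasDerivAt_mul_hardyAverage {s : ℝ} (hs : 0 < s) :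
    HasDerivAt (fun r => r * hardyAverage n f r) ((n + 1) * f s - n * hardyAverage n f s) s := by
  have hint : HasDerivAt (fun r => ∫ t in (0 : ℝ)..r, (n + 1) * t ^ n * f t)
      ((n + 1) * s ^ n * f s) s :=
    (Continuous.integral_hasStrictDerivAt (by fun_prop) 0 s).hasDerivAt
  have hquot := hint.fun_div (hasDerivAt_pow n s) (pow_ne_zero n hs.ne')
  simp only [← pow_succ_mul_hardyAverage] at hquot
  refine (hquot.congr_of_eventuallyEq ?_).congr_deriv ?_
  · filter_upwards [lt_mem_nhds hs] with r hr
    rw [pow_succ]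
    field_simp
  · rcases n with _ | n
    · simp
    · simp only [Nat.add_sub_cancel]
      field_simp
      ring

end HardyAverage

/-! ### Profiles -/

section Relaxation

/-- The fixed point step `z ↦ g / z - c`, damped by averaging it with weight `1 / (n + 1)` against
the identity. -/
noncomputable def relaxation (c : ℝ) (n : ℕ) (g z : ℝ) : ℝ :=
  (g / z - c + n * z) / (n + 1)

variable {c g m y z : ℝ} {n : ℕ}

theorem relaxation_sub_mem_Icc (hg : 0 ≤ g) (hm : 0 < m) (hgn : g ≤ n * m ^ 2) (hmy : m ≤ y)
    (hyz : y ≤ z) :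
    relaxation c n g z - relaxation c n g y ∈ Icc 0 (n / (n + 1) * (z - y)) := by
  have hy : 0 < y := hm.trans_le hmy
  have hz : 0 < z := hy.trans_le hyz
  have heq : relaxation c n g z - relaxation c n g y = (n - g / (y * z)) / (n + 1) * (z - y) := by
    simp only [relaxation]
    field_simp
    ring
  have hquot : g / (y * z) ≤ n := by
    rw [div_le_iff₀ (by positivity)]
    refine hgn.trans (mul_le_mul_of_nonneg_left ?_ n.cast_nonneg)
    rw [sq]
    exact mul_le_mul hmy (hmy.trans hyz) hm.le hy.le
  rw [heq]
  constructor
  · exact mul_nonneg (div_nonneg (sub_nonneg.2 hquot) (by positivity)) (sub_nonneg.2 hyz)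
  · gcongr
    exact sub_le_self _ (by positivity)

theorem abs_relaxation_sub_le (hg : 0 ≤ g) (hm : 0 < m) (hgn : g ≤ n * m ^ 2) (hy : m ≤ y)
    (hz : m ≤ z) :
    |relaxation c n g z - relaxation c n g y| ≤ n / (n + 1) * |z - y| := by
  wlog hyz : y ≤ z generalizing y z
  · rw [abs_sub_comm, abs_sub_comm z]
    exact this hz hy (le_of_not_ge hyz)
  have h := relaxation_sub_mem_Icc (c := c) hg hm hgn hy hyz
  rw [abs_of_nonneg h.1, abs_of_nonneg (sub_nonneg.2 hyz)]
  exact h.2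

theorem le_relaxation_self (hz : 0 < z) (h : z ^ 2 + c * z ≤ g) : z ≤ relaxation c n g z := by
  have : z + c ≤ g / z := by rw [le_div_iff₀ hz]; linarith
  rw [relaxation, le_div_iff₀ (by positivity)]
  linarith

theorem relaxation_self_le (hz : 0 < z) (h : g ≤ z ^ 2 + c * z) : relaxation c n g z ≤ z := by
  have : g / z ≤ z + c := by rw [div_le_iff₀ hz]; linarith
  rw [relaxation, div_le_iff₀ (by positivity)]
  linarith

theorem relaxation_mem_Icc {M : ℝ} (hg : 0 ≤ g) (hm : 0 < m) (hgn : g ≤ n * m ^ 2)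
    (hgm : m ^ 2 + c * m ≤ g) (hgM : g ≤ M ^ 2 + c * M) (hz : z ∈ Icc m M) :
    relaxation c n g z ∈ Icc m M :=
  ⟨(le_relaxation_self hm hgm).trans
      (sub_nonneg.1 (relaxation_sub_mem_Icc hg hm hgn le_rfl hz.1).1),
    (sub_nonneg.1 (relaxation_sub_mem_Icc hg hm hgn hz.1 hz.2).1).trans
      (relaxation_self_le (hm.trans_le (hz.1.trans hz.2)) hgM)⟩

end Relaxation

section ProfileMap

variable {G Z : ℝ →ᵇ ℝ} {n : ℕ} {c m : ℝ}

/-- The relaxation of `Z` towards `G / Z - c`, as a map of the pair `(c, Z)` on a Banach space.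
`Ring.inverse` extends it by a junk value to those `Z` which are not bounded away from `0`. -/
noncomputable def profileStep (G : ℝ →ᵇ ℝ) (n : ℕ) (p : ℝ × (ℝ →ᵇ ℝ)) : ℝ →ᵇ ℝ :=
  (n + 1 : ℝ)⁻¹ • (G * Ring.inverse p.2 - p.1 • 1 + (n : ℝ) • p.2)

/-- The integral operator whose positive fixed points `Z`, for a given `c`, are the solutions of
`(s Z)' = G / Z - c` that are regular at the singular point `s = 0`. -/
noncomputable def profileMap (G : ℝ →ᵇ ℝ) (n : ℕ) (p : ℝ × (ℝ →ᵇ ℝ)) : ℝ →ᵇ ℝ :=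
  hardyAverage n (profileStep G n p)

theorem profileStep_apply (hZ : IsUnit Z) (s : ℝ) :
    profileStep G n (c, Z) s = relaxation c n (G s) (Z s) := by
  simp only [profileStep, relaxation, BoundedContinuousFunction.smul_apply,
    BoundedContinuousFunction.add_apply, BoundedContinuousFunction.sub_apply,
    BoundedContinuousFunction.mul_apply, BoundedContinuousFunction.coe_one, Pi.one_apply,
    ringInverse_apply_of_isUnit hZ, smul_eq_mul, mul_one]
  ring

theorem contDiffAt_profileMap (hZ : IsUnit Z) : ContDiffAt ℝ ω (profileMap G n) (c, Z) := by
  obtain ⟨u, rfl⟩ := hZ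
  have hinv : ContDiffAt ℝ ω (fun p : ℝ × (ℝ →ᵇ ℝ) => Ring.inverse p.2) (c, (u : ℝ →ᵇ ℝ)) :=
    (contDiffAt_ringInverse ℝ u).comp (c, (u : ℝ →ᵇ ℝ)) contDiffAt_snd
  exact (hardyAverage n).contDiff.contDiffAt.comp _ (contDiffAt_const.fun_smul
    (((contDiffAt_const.mul hinv).sub (contDiffAt_fst.fun_smul contDiffAt_const)).add
      (contDiffAt_const.fun_smul contDiffAt_snd)))

theorem lipschitzOnWith_profileMap (hG : ∀ s, 0 ≤ G s) (hm : 0 < m)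
    (hn : ∀ s, G s ≤ n * m ^ 2) (c : ℝ) :
    LipschitzOnWith (n / (n + 1)) (fun Z => profileMap G n (c, Z)) {Z | ∀ s, m ≤ Z s} := by
  refine LipschitzOnWith.of_dist_le_mul fun Z hZ Y hY => ?_
  have hstep : dist (profileStep G n (c, Z)) (profileStep G n (c, Y)) ≤
      n / (n + 1) * dist Z Y := by
    rw [BoundedContinuousFunction.dist_le (by positivity)]
    intro s
    rw [profileStep_apply (isUnit_of_forall_le hm hZ),
      profileStep_apply (isUnit_of_forall_le hm hY)]
    calc dist (relaxation c n (G s) (Z s)) (relaxation c n (G s) (Y s))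
        ≤ n / (n + 1) * dist (Z s) (Y s) :=
          abs_relaxation_sub_le (hG s) hm (hn s) (hY s) (hZ s)
      _ ≤ n / (n + 1) * dist Z Y := by
          gcongr
          exact BoundedContinuousFunction.dist_coe_le_dist s
  have havg : dist (profileMap G n (c, Z)) (profileMap G n (c, Y)) ≤
      dist (profileStep G n (c, Z)) (profileStep G n (c, Y)) := by
    rw [dist_eq_norm, dist_eq_norm, profileMap, profileMap, ← map_sub]
    exact (hardyAverage n).le_of_opNorm_le_of_le (norm_hardyAverage_le n) le_rfl |>.trans_eq
      (one_mul _)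
  exact_mod_cast havg.trans hstep

theorem profileMap_mem_Icc {M : ℝ} (hG : ∀ s, 0 ≤ G s) (hm : 0 < m)
    (hn : ∀ s, G s ≤ n * m ^ 2) (hGm : ∀ s, m ^ 2 + c * m ≤ G s)
    (hGM : ∀ s, G s ≤ M ^ 2 + c * M) (hZ : ∀ s, Z s ∈ Icc m M) (s : ℝ) :
    profileMap G n (c, Z) s ∈ Icc m M := by
  refine hardyAverage_mem_Icc n (fun r => ?_) s
  rw [profileStep_apply (isUnit_of_forall_le hm fun r => (hZ r).1)]
  exact relaxation_mem_Icc (hG r) hm (hn r) (hGm r) (hGM r) (hZ r)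

theorem natCast_div_succ_lt_one (n : ℕ) : (n / (n + 1) : NNReal) < 1 := by
  rw [div_lt_one (by positivity)]
  exact lt_add_one _

theorem exists_profileMap_fixedPoint {M : ℝ} (hG : ∀ s, 0 ≤ G s) (hm : 0 < m) (hmM : m ≤ M)
    (hn : ∀ s, G s ≤ n * m ^ 2) (hGm : ∀ s, m ^ 2 + c * m ≤ G s)
    (hGM : ∀ s, G s ≤ M ^ 2 + c * M) :
    ∃ Z : ℝ →ᵇ ℝ, (∀ s, m ≤ Z s) ∧ profileMap G n (c, Z) = Z := by
  let S : Set (ℝ →ᵇ ℝ) := {Z | ∀ s, Z s ∈ Icc m M}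
  have hclosed : IsClosed S := by
    simp only [S, Set.ofPred_forall]
    exact isClosed_iInter fun s =>
      isClosed_Icc.preimage (BoundedContinuousFunction.evalCLM ℝ s).continuous
  have hmaps : MapsTo (fun Z => profileMap G n (c, Z)) S S := fun Z hZ =>
    profileMap_mem_Icc hG hm hn hGm hGM hZ
  have hcontr : ContractingWith (n / (n + 1)) (hmaps.restrict _ S S) :=
    ⟨natCast_div_succ_lt_one n, ((lipschitzOnWith_profileMap hG hm hn c).mono
      fun Z hZ s => (hZ s).1).mapsToRestrict hmaps⟩
  obtain ⟨Z, hZ, hfix, -⟩ := hcontr.exists_fixedPoint' hclosed.isComplete hmaps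
    (x := BoundedContinuousFunction.const ℝ m) (fun _ => ⟨le_rfl, hmM⟩) (edist_ne_top _ _)
  exact ⟨Z, fun s => (hZ s).1, hfix⟩

end ProfileMap

/-- A profile at speed `c`: a positive bounded continuous function with `(s Z)' = G / Z - c` for
`s > 0`. With `F (θ₊ - s) = s * G s`, the curve `s ↦ (θ₊ - s, s * Z s)` is then the branch of the
stable manifold of the saddle `(θ₊, 0)` of `u' = v`, `v' = c v - F u` in `u < θ₊`, `v > 0`. -/
structure IsProfile (G : ℝ → ℝ) (c : ℝ) (Z : ℝ →ᵇ ℝ) : Prop where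
  pos : ∀ s, 0 < Z s
  hasDerivAt : ∀ s, 0 < s → HasDerivAt (fun r => r * Z r) (G s / Z s - c) s

namespace IsProfile

variable {c : ℝ}

theorem of_profileMap_eq {G Z : ℝ →ᵇ ℝ} {n : ℕ} {m : ℝ} (hm : 0 < m) (hZ : ∀ s, m ≤ Z s)
    (hfix : profileMap G n (c, Z) = Z) : IsProfile G c Z := by
  refine ⟨fun s => hm.trans_le (hZ s), fun s hs => ?_⟩
  have h := hasDerivAt_mul_hardyAverage n (profileStep G n (c, Z)) hs
  rw [show hardyAverage n _ = Z from hfix, profileStep_apply (isUnit_of_forall_le hm hZ)] at h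
  refine h.congr_deriv ?_
  rw [relaxation]
  field_simp
  ring

section Comparison

variable {G : ℝ → ℝ} {c₁ c₂ s : ℝ} {Z Z₁ Z₂ : ℝ →ᵇ ℝ}

theorem le_of_speed_le (h₁ : IsProfile G c₁ Z₁) (h₂ : IsProfile G c₂ Z₂)
    (hG : ∀ s, 0 < s → 0 < G s) (hc : c₁ ≤ c₂) (hs : 0 < s) : Z₂ s ≤ Z₁ s := by
  have hE : s * Z₂ s - s * Z₁ s ≤ 0 :=
    nonpos_of_hasDerivAt_neg_of_pos (E := fun r => r * Z₂ r - r * Z₁ r) hs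
      (Continuous.continuousWithinAt (by fun_prop)) (by simp)
      (fun r hr => (h₂.hasDerivAt r hr).fun_sub (h₁.hasDerivAt r hr)) fun r hr hpos => by
        rw [← mul_sub] at hpos
        have hlt : Z₁ r < Z₂ r := sub_pos.1 (pos_of_mul_pos_right hpos hr.le)
        have := div_lt_div_of_pos_left (hG r hr) (h₁.pos r) hlt
        linarith
  rw [← mul_sub] at hE
  exact sub_nonpos.1 (nonpos_of_mul_nonpos_right hE hs)

theorem eq_of_pos (h₁ : IsProfile G c Z₁) (h₂ : IsProfile G c Z₂) (hG : ∀ s, 0 < s → 0 < G s)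
    (hs : 0 < s) : Z₁ s = Z₂ s :=
  (h₂.le_of_speed_le h₁ hG le_rfl hs).antisymm (h₁.le_of_speed_le h₂ hG le_rfl hs)

theorem lt_of_speed_lt (h₁ : IsProfile G c₁ Z₁) (h₂ : IsProfile G c₂ Z₂)
    (hG : ∀ s, 0 < s → 0 < G s) (hc : c₁ < c₂) (hs : 0 < s) : Z₂ s < Z₁ s := by
  refine (h₁.le_of_speed_le h₂ hG hc.le hs).lt_of_ne fun heq => hc.ne ?_
  have hmax : IsLocalMax (fun r => r * Z₂ r - r * Z₁ r) s := by
    filter_upwards [lt_mem_nhds hs] with r hr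
    rw [heq, sub_self, ← mul_sub]
    exact mul_nonpos_of_nonneg_of_nonpos hr.le
      (sub_nonpos.2 (h₁.le_of_speed_le h₂ hG hc.le hr))
  have h := hmax.hasDerivAt_eq_zero ((h₂.hasDerivAt s hs).fun_sub (h₁.hasDerivAt s hs))
  rw [heq] at h
  linarith

theorem speed_mul_le (h : IsProfile G c Z) (hG : ∀ s, 0 < s → 0 < G s) {b : ℝ}
    (hb : ∀ s, 0 < s → G s ≤ b) (hs : 0 < s) : c * Z s ≤ b := by
  have hb0 : 0 < b := (hG s hs).trans_le (hb s hs)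
  rcases le_or_gt c 0 with hc | hc
  · exact (mul_nonpos_of_nonpos_of_nonneg hc (h.pos s).le).trans hb0.le
  have hE : s * Z s - s * (b / c) ≤ 0 :=
    nonpos_of_hasDerivAt_neg_of_pos (E := fun r => r * Z r - r * (b / c)) hs
      (Continuous.continuousWithinAt (by fun_prop)) (by simp)
      (fun r hr => (h.hasDerivAt r hr).fun_sub ((hasDerivAt_id' r).mul_const (b / c)))
      fun r hr hpos => by
        rw [← mul_sub] at hpos
        have hlt : b / c < Z r := sub_pos.1 (pos_of_mul_pos_right hpos hr.le)
        have hquot : G r / Z r < c := by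
          rw [div_lt_iff₀ (h.pos r)]
          exact (hb r hr).trans_lt ((div_lt_iff₀' hc).1 hlt)
        linarith [div_pos hb0 hc]
  rw [← mul_sub] at hE
  exact (le_div_iff₀' hc).1 (sub_nonpos.1 (nonpos_of_mul_nonpos_right hE hs))

theorem sq_eq_integral (h : IsProfile G c Z) (hG : Continuous G) (hs : 0 ≤ s) :
    (s * Z s) ^ 2 = 2 * ∫ r in (0 : ℝ)..s, (r * G r - c * (r * Z r)) := by
  have hderiv : ∀ r ∈ Ioo 0 s,
      HasDerivAt (fun r => (r * Z r) ^ 2 / 2) (r * G r - c * (r * Z r)) r := fun r hr =>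
    (((h.hasDerivAt r hr.1).fun_pow 2).div_const 2).congr_deriv (by
      have := (h.pos r).ne'
      field_simp
      norm_num
      ring)
  rw [intervalIntegral.integral_eq_sub_of_hasDerivAt_of_le hs (by fun_prop) hderiv
    (Continuous.intervalIntegrable (by fun_prop) _ _)]
  ring

end Comparison

end IsProfile

section ProfileFamily

variable {G : ℝ →ᵇ ℝ} {a : ℝ}

theorem exists_profileMap_fixedPoint_of_pos_le (ha : 0 < a) (hG : ∀ s, a ≤ G s) (c : ℝ) :
    ∃ (n : ℕ) (m : ℝ) (Z : ℝ →ᵇ ℝ), 0 < m ∧ (∀ s, G s ≤ n * (m / 2) ^ 2) ∧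
      (∀ s, m ≤ Z s) ∧ profileMap G n (c, Z) = Z := by
  set m : ℝ := min 1 (a / (1 + |c|))
  have hm : 0 < m := lt_min one_pos (by positivity)
  have hm1 : m ≤ 1 := min_le_left _ _
  have hma : m ^ 2 + c * m ≤ a := by
    have : m * (1 + |c|) ≤ a := (le_div_iff₀ (by positivity)).1 (min_le_right _ _)
    nlinarith [le_abs_self c]
  set M : ℝ := 1 + |c| + ‖G‖
  have hM1 : 1 ≤ M := by simp only [M]; linarith [abs_nonneg c, norm_nonneg G]
  have hMG : ‖G‖ ≤ M ^ 2 + c * M := by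
    have : ‖G‖ ≤ M + c := by simp only [M]; linarith [neg_abs_le c]
    nlinarith [norm_nonneg G]
  have hGle : ∀ s, G s ≤ ‖G‖ := fun s => (le_abs_self _).trans (G.norm_coe_le_norm s)
  obtain ⟨n, hn⟩ := exists_nat_ge (‖G‖ / (m / 2) ^ 2)
  have hGn : ∀ s, G s ≤ n * (m / 2) ^ 2 := fun s =>
    (hGle s).trans ((div_le_iff₀ (by positivity)).1 hn)
  have hGn' : ∀ s, G s ≤ n * m ^ 2 := fun s => (hGn s).trans (by gcongr; linarith)
  obtain ⟨Z, hmZ, hZ⟩ := exists_profileMap_fixedPoint (fun s => ha.le.trans (hG s)) hm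
    (hm1.trans hM1) hGn' (fun s => hma.trans (hG s)) (fun s => (hGle s).trans hMG)
  exact ⟨n, m, Z, hm, hGn, hmZ, hZ⟩

theorem exists_contDiffAt_isProfile (ha : 0 < a) (hG : ∀ s, a ≤ G s) (c₀ : ℝ) :
    ∃ Y : ℝ → ℝ →ᵇ ℝ, ContDiffAt ℝ ω Y c₀ ∧ ∀ᶠ c in 𝓝 c₀, IsProfile G c (Y c) := by
  obtain ⟨n, m, Z, hm, hn, hmZ, hZ⟩ := exists_profileMap_fixedPoint_of_pos_le ha hG c₀
  have hball : ∀ Y ∈ Metric.ball Z (m / 2), ∀ s, m / 2 ≤ Y s := fun Y hY s => by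
    have h := (BoundedContinuousFunction.dist_coe_le_dist (f := Y) (g := Z) s).trans_lt hY
    rw [Real.dist_eq, abs_lt] at h
    linarith [hmZ s]
  have hnhds : Metric.ball Z (m / 2) ∈ 𝓝 Z := Metric.ball_mem_nhds Z (half_pos hm)
  obtain ⟨Y, hY, hY₀, hfix⟩ := exists_contDiffAt_fixedPoint (by simp)
    (contDiffAt_profileMap (isUnit_of_forall_le hm hmZ)) hZ (natCast_div_succ_lt_one n)
    (mem_of_superset hnhds hball)
    (lipschitzOnWith_profileMap (fun s => ha.le.trans (hG s)) (half_pos hm) hn c₀)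
  refine ⟨Y, hY, ?_⟩
  filter_upwards [hfix, hY.continuousAt.eventually_mem (by rwa [hY₀])] with c hc hYc
  exact .of_profileMap_eq (half_pos hm) (hball _ hYc) hc

theorem exists_isProfile_family (ha : 0 < a) (hG : ∀ s, a ≤ G s) :
    ∃ Z : ℝ → ℝ →ᵇ ℝ, (∀ c, IsProfile G c (Z c)) ∧
      ∀ s, 0 < s → ContDiff ℝ ω fun c => Z c s := by
  choose Y hY hYprofile using exists_contDiffAt_isProfile ha hG
  refine ⟨fun c => Y c c, fun c => (hYprofile c).self_of_nhds, fun s hs =>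
    contDiff_iff_contDiffAt.2 fun c₀ => ?_⟩
  refine ((BoundedContinuousFunction.evalCLM ℝ s).contDiff.contDiffAt.comp c₀
    (hY c₀)).congr_of_eventuallyEq ?_
  filter_upwards [hYprofile c₀] with c hc
  exact (hYprofile c).self_of_nhds.eq_of_pos hc (fun r _ => ha.trans_le (hG r)) hs

end ProfileFamily

/-! ### Monotone connections -/

theorem exists_decaying_orbit {Z : ℝ →ᵇ ℝ} (hZ : ∀ s, 0 < Z s) {L : ℝ} (hL : 0 < L) (R : ℝ) :
    ∃ s : ℝ → ℝ, s R = L ∧ (∀ x, 0 < s x) ∧ (∀ x, HasDerivAt s (-(s x * Z (s x))) x) ∧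
      Tendsto s atTop (𝓝 0) := by
  have hcont : Continuous fun t => (Z (L * Real.exp (-t)))⁻¹ :=
    Continuous.inv₀ (by fun_prop) fun t => (hZ _).ne'
  have hle : ∀ r, Z r ≤ ‖Z‖ := fun r => (le_abs_self _).trans (Z.norm_coe_le_norm r)
  have htime : ∀ τ, HasDerivAt (fun τ => R + ∫ t in (0 : ℝ)..τ, (Z (L * Real.exp (-t)))⁻¹)
      (Z (L * Real.exp (-τ)))⁻¹ τ := fun τ =>
    (hcont.integral_hasStrictDerivAt 0 τ).hasDerivAt.const_add R
  obtain ⟨e, he⟩ := exists_orderIso_of_le_deriv (inv_pos.2 ((hZ 0).trans_le (hle 0))) htime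
    fun τ => inv_anti₀ (hZ _) (hle _)
  have hsymm : ∀ x, HasDerivAt e.symm (Z (L * Real.exp (-e.symm x))) x := fun x => by
    have h := hasDerivAt_orderIso_symm (e := e) (he ▸ htime (e.symm x)) (inv_ne_zero (hZ _).ne')
    rwa [inv_inv] at h
  have hR : e.symm R = 0 := by simp [e.symm_apply_eq, he]
  refine ⟨fun x => L * Real.exp (-e.symm x), by simp [hR], fun x => by positivity, fun x => ?_, ?_⟩
  · exact ((hsymm x).fun_neg.exp.const_mul L).congr_deriv (by ring)
  · simpa using (Real.tendsto_exp_neg_atTop_nhds_zero.comp e.symm.tendsto_atTop).const_mul L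

/-- `θ` is a `C²` solution of `θ'' - c θ' + F θ = 0` on `[R, ∞)` which increases from `θ₀` to `θ₁`
with initial slope `v`: a heteroclinic connection seen from its crossing of the level `θ₀`.
Derivatives at the endpoint `R` are one-sided. -/
def IsMonotoneConnection (F : ℝ → ℝ) (θ₀ θ₁ R c v : ℝ) (θ : ℝ → ℝ) : Prop :=
  ContDiffOn ℝ 2 θ (Ici R) ∧
    (∀ x ∈ Ici R, derivWithin (derivWithin θ (Ici R)) (Ici R) x
      - c * derivWithin θ (Ici R) x + F (θ x) = 0) ∧
    θ R = θ₀ ∧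
    derivWithin θ (Ici R) R = v ∧
    (∀ x ∈ Ici R, 0 < derivWithin θ (Ici R) x) ∧
    Tendsto θ atTop (𝓝 θ₁)

namespace IsMonotoneConnection

variable {F θ : ℝ → ℝ} {θ₀ θ₁ R c v : ℝ}

theorem of_hasDerivAt {w f : ℝ → ℝ} (hθ : ∀ x, HasDerivAt θ (w x) x)
    (hw : ∀ x, HasDerivAt w (c * w x - f x) x) (hf : Continuous f)
    (hfF : ∀ x ∈ Ici R, f x = F (θ x)) (hpos : ∀ x ∈ Ici R, 0 < w x)
    (hlim : Tendsto θ atTop (𝓝 θ₁)) : IsMonotoneConnection F (θ R) θ₁ R c (w R) θ := by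
  have hθ' : ∀ x ∈ Ici R, derivWithin θ (Ici R) x = w x := fun x hx =>
    (hθ x).hasDerivWithinAt.derivWithin (uniqueDiffOn_Ici R x hx)
  have hwcont : Continuous w := continuous_iff_continuousAt.2 fun x => (hw x).continuousAt
  have hwsmooth : ContDiff ℝ 1 w := by
    refine contDiff_one_iff_deriv.2 ⟨fun x => (hw x).differentiableAt, ?_⟩
    rw [funext fun x => (hw x).deriv]
    fun_prop
  have hθsmooth : ContDiff ℝ (1 + 1) θ := by
    refine contDiff_succ_iff_deriv.2 ⟨fun x => (hθ x).differentiableAt, by simp, ?_⟩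
    rwa [funext fun x => (hθ x).deriv]
  refine ⟨by simpa [one_add_one_eq_two] using hθsmooth.contDiffOn, fun x hx => ?_, rfl,
    hθ' R self_mem_Ici, fun x hx => (hpos x hx).trans_eq (hθ' x hx).symm, hlim⟩
  rw [derivWithin_congr hθ' (hθ' x hx), (hw x).hasDerivWithinAt.derivWithin
    (uniqueDiffOn_Ici R x hx), hθ' x hx, hfF x hx]
  ring

theorem hasDerivWithinAt (h : IsMonotoneConnection F θ₀ θ₁ R c v θ) {x : ℝ} (hx : x ∈ Ici R) :
    HasDerivWithinAt θ (derivWithin θ (Ici R) x) (Ici R) x :=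
  (h.1.differentiableOn two_ne_zero x hx).hasDerivWithinAt

theorem hasDerivWithinAt_derivWithin (h : IsMonotoneConnection F θ₀ θ₁ R c v θ) {x : ℝ}
    (hx : x ∈ Ici R) :
    HasDerivWithinAt (derivWithin θ (Ici R)) (c * derivWithin θ (Ici R) x - F (θ x)) (Ici R) x := by
  have hC1 : ContDiffOn ℝ 1 (derivWithin θ (Ici R)) (Ici R) :=
    h.1.derivWithin (uniqueDiffOn_Ici R) one_add_one_eq_two.le
  refine (hC1.differentiableOn one_ne_zero x hx).hasDerivWithinAt.congr_deriv ?_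
  linarith [h.2.1 x hx]

theorem strictMonoOn (h : IsMonotoneConnection F θ₀ θ₁ R c v θ) : StrictMonoOn θ (Ici R) :=
  strictMonoOn_of_hasDerivWithinAt_pos (convex_Ici R) h.1.continuousOn
    (fun _ hx => (h.hasDerivWithinAt (interior_subset hx)).mono interior_subset)
    fun x hx => h.2.2.2.2.1 x (interior_subset hx)

theorem mem_Ico (h : IsMonotoneConnection F θ₀ θ₁ R c v θ) {x : ℝ} (hx : x ∈ Ici R) :
    θ x ∈ Ico θ₀ θ₁ := by
  obtain ⟨-, -, hR, -, -, hlim⟩ := id h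
  refine ⟨hR ▸ h.strictMonoOn.monotoneOn self_mem_Ici hx hx, ?_⟩
  have hx₁ : x + 1 ∈ Ici R := (mem_Ici.1 hx).trans (lt_add_one x).le
  refine (h.strictMonoOn hx hx₁ (lt_add_one x)).trans_le (ge_of_tendsto hlim ?_)
  filter_upwards [eventually_ge_atTop (x + 1)] with y hy
  exact h.strictMonoOn.monotoneOn hx₁ (hx₁.trans hy) hy

end IsMonotoneConnection

namespace IsProfile

variable {F G : ℝ → ℝ} {Z : ℝ →ᵇ ℝ} {θ₀ θ₁ c v : ℝ}

theorem exists_isMonotoneConnection (h : IsProfile G c Z) (hG : Continuous G) (hθ : θ₀ < θ₁)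
    (hFG : ∀ s ∈ Icc 0 (θ₁ - θ₀), F (θ₁ - s) = s * G s) (R : ℝ) :
    ∃ θ, IsMonotoneConnection F θ₀ θ₁ R c ((θ₁ - θ₀) * Z (θ₁ - θ₀)) θ := by
  obtain ⟨s, hsR, hspos, hs, hs0⟩ := exists_decaying_orbit h.pos (sub_pos.2 hθ) R
  have hvpos : ∀ x, 0 < s x * Z (s x) := fun x => mul_pos (hspos x) (h.pos _)
  have hscont : Continuous s := continuous_iff_continuousAt.2 fun x => (hs x).continuousAt
  have hsanti : Antitone s :=
    antitone_of_hasDerivAt_nonpos hs fun x => neg_nonpos.2 (hvpos x).le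
  have hv : ∀ x, HasDerivAt (fun x => s x * Z (s x))
      (c * (s x * Z (s x)) - s x * G (s x)) x := fun x =>
    ((h.hasDerivAt (s x) (hspos x)).comp x (hs x)).congr_deriv (by
      have := (h.pos (s x)).ne'
      field_simp
      ring)
  have hconn := IsMonotoneConnection.of_hasDerivAt (F := F) (R := R) (θ₁ := θ₁)
    (fun x => ((hs x).const_sub θ₁).congr_deriv (neg_neg _)) hv (by fun_prop)
    (fun x hx => (hFG (s x) ⟨(hspos x).le, hsR ▸ hsanti hx⟩).symm) (fun x _ => hvpos x)
    (by simpa using hs0.const_sub θ₁)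
  rw [hsR, sub_sub_cancel] at hconn
  exact ⟨_, hconn⟩

section Uniqueness

variable {R : ℝ} {θ : ℝ → ℝ}

theorem hasDerivWithinAt_derivWithin_sub (h : IsProfile G c Z)
    (hconn : IsMonotoneConnection F θ₀ θ₁ R c v θ)
    (hFG : ∀ s ∈ Icc 0 (θ₁ - θ₀), F (θ₁ - s) = s * G s) {x : ℝ} (hx : x ∈ Ici R) :
    HasDerivWithinAt (fun x => derivWithin θ (Ici R) x - (θ₁ - θ x) * Z (θ₁ - θ x))
      (G (θ₁ - θ x) / Z (θ₁ - θ x) * (derivWithin θ (Ici R) x - (θ₁ - θ x) * Z (θ₁ - θ x)))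
      (Ici R) x := by
  have hs : 0 < θ₁ - θ x := sub_pos.2 (hconn.mem_Ico hx).2
  have hFθ := hFG (θ₁ - θ x) ⟨hs.le, sub_le_sub_left (hconn.mem_Ico hx).1 θ₁⟩
  rw [sub_sub_cancel] at hFθ
  refine ((hconn.hasDerivWithinAt_derivWithin hx).fun_sub ((h.hasDerivAt _
    hs).comp_hasDerivWithinAt x ((hconn.hasDerivWithinAt hx).const_sub θ₁))).congr_deriv ?_
  rw [hFθ]
  have := (h.pos (θ₁ - θ x)).ne'
  field_simp
  ring

-- The distance of the orbit from the profile curve grows exponentially, while a connection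
-- must return to the saddle, where this distance vanishes.
theorem slope_eq (h : IsProfile G c Z) (hconn : IsMonotoneConnection F θ₀ θ₁ R c v θ)
    (hG : ∀ s, 0 < s → 0 < G s) (hFG : ∀ s ∈ Icc 0 (θ₁ - θ₀), F (θ₁ - s) = s * G s) :
    v = (θ₁ - θ₀) * Z (θ₁ - θ₀) := by
  obtain ⟨-, -, hR, hslope, -, hlim⟩ := id hconn
  obtain ⟨ξ, hξ, hvξ⟩ := exists_seq_tendsto_deriv_zero (f := θ) (f' := derivWithin θ (Ici R))
    ((eventually_gt_atTop R).mono fun x hx =>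
      (hconn.hasDerivWithinAt (mem_Ici_of_Ioi hx)).hasDerivAt (Ici_mem_nhds hx)) hlim
  have hsξ : Tendsto (fun n => θ₁ - θ (ξ n)) atTop (𝓝 0) := by
    simpa using (hlim.comp hξ).const_sub θ₁
  have hDξ : Tendsto (fun n => derivWithin θ (Ici R) (ξ n) - (θ₁ - θ (ξ n)) * Z (θ₁ - θ (ξ n)))
      atTop (𝓝 0) := by
    simpa using hvξ.sub (hsξ.mul ((Z.continuous.tendsto 0).comp hsξ))
  have hDR := eq_zero_of_hasDerivWithinAt_mul
    (fun x hx => (div_pos (hG _ (sub_pos.2 (hconn.mem_Ico hx).2)) (h.pos _)).le)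
    (fun x hx => h.hasDerivWithinAt_derivWithin_sub hconn hFG hx) hξ hDξ
  rw [hR, hslope] at hDR
  exact sub_eq_zero.1 hDR

end Uniqueness

theorem sq_eq_two_mul_integral (h : IsProfile G 0 Z) (hG : Continuous G) (hθ : θ₀ ≤ θ₁)
    (hFG : ∀ s ∈ Icc 0 (θ₁ - θ₀), F (θ₁ - s) = s * G s) :
    ((θ₁ - θ₀) * Z (θ₁ - θ₀)) ^ 2 = 2 * ∫ u in θ₀..θ₁, F u := by
  have hL : 0 ≤ θ₁ - θ₀ := sub_nonneg.2 hθ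
  have hsubst := intervalIntegral.integral_comp_sub_left (a := 0) (b := θ₁ - θ₀) F θ₁
  rw [sub_zero, sub_sub_cancel] at hsubst
  rw [h.sq_eq_integral hG hL, ← hsubst]
  refine congrArg (2 * ·) (intervalIntegral.integral_congr fun s hs => ?_)
  rw [uIcc_of_le hL] at hs
  simp only [hFG s hs, zero_mul, sub_zero]

end IsProfile

theorem exists_boundedContinuousFunction_sub_eq_mul {F : ℝ → ℝ} {F' θ₀ θ₁ : ℝ} (hθ : θ₀ < θ₁)
    (hF : ContinuousOn F (Icc θ₀ θ₁)) (hF₁ : F θ₁ = 0) (hpos : ∀ u ∈ Ico θ₀ θ₁, 0 < F u)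
    (hF' : HasDerivWithinAt F F' (Icc θ₀ θ₁) θ₁) (hneg : F' < 0) :
    ∃ (G : ℝ →ᵇ ℝ) (a : ℝ), 0 < a ∧ (∀ s, a ≤ G s) ∧
      ∀ s ∈ Icc 0 (θ₁ - θ₀), F (θ₁ - s) = s * G s := by
  obtain ⟨k, hk, hk₁, hFk⟩ := exists_continuousOn_sub_mul_eq hF hF₁ hF'
  have hmaps : MapsTo (fun s => θ₁ - s) (Icc 0 (θ₁ - θ₀)) (Icc θ₀ θ₁) := fun s hs =>
    ⟨by linarith [hs.2], by linarith [hs.1]⟩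
  have hquot : ∀ s, F (θ₁ - s) = s * -k (θ₁ - s) := fun s => by
    rw [hFk]
    ring
  have hkneg : ∀ s ∈ Icc 0 (θ₁ - θ₀), 0 < -k (θ₁ - s) := fun s hs => by
    rcases hs.1.eq_or_lt with rfl | hs₀
    · rw [sub_zero, hk₁]
      exact neg_pos.2 hneg
    · refine pos_of_mul_pos_right ?_ hs₀.le
      rw [← hquot]
      exact hpos _ ⟨(hmaps hs).1, sub_lt_self _ hs₀⟩
  obtain ⟨G, a, ha, haG, hGk⟩ := exists_boundedContinuousFunction_eqOn_Icc (sub_nonneg.2 hθ.le)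
    (hk.comp (by fun_prop) hmaps).neg hkneg
  exact ⟨G, a, ha, haG, fun s hs => by rw [hGk hs]; exact hquot s⟩

theorem exists_isMonotoneConnection_iff_slope_eq {F : ℝ → ℝ} {F' θ₀ θ₁ : ℝ} (hθ : θ₀ < θ₁)
    (hF : ContinuousOn F (Icc θ₀ θ₁)) (hF₁ : F θ₁ = 0) (hpos : ∀ u ∈ Ico θ₀ θ₁, 0 < F u)
    (hF' : HasDerivWithinAt F F' (Icc θ₀ θ₁) θ₁) (hneg : F' < 0) :
    ∃ h : ℝ → ℝ, ContDiff ℝ ω h ∧ StrictAnti h ∧ (∀ c, 0 < h c) ∧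
      h 0 = √(2 * ∫ u in θ₀..θ₁, F u) ∧ (∃ B, ∀ c, c * h c ≤ B) ∧
      ∀ R c v, (∃ θ, IsMonotoneConnection F θ₀ θ₁ R c v θ) ↔ v = h c := by
  have hL : 0 < θ₁ - θ₀ := sub_pos.2 hθ
  obtain ⟨G, a, ha, haG, hFG⟩ := exists_boundedContinuousFunction_sub_eq_mul hθ hF hF₁ hpos hF' hneg
  have hG : ∀ s, 0 < s → 0 < G s := fun s _ => ha.trans_le (haG s)
  obtain ⟨Z, hZ, hsmooth⟩ := exists_isProfile_family ha haG
  have hpos : ∀ c, 0 < (θ₁ - θ₀) * Z c (θ₁ - θ₀) := fun c => mul_pos hL ((hZ c).pos _)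
  refine ⟨fun c => (θ₁ - θ₀) * Z c (θ₁ - θ₀), contDiff_const.mul (hsmooth _ hL),
    fun c₁ c₂ hc => mul_lt_mul_of_pos_left ((hZ c₁).lt_of_speed_lt (hZ c₂) hG hc hL) hL,
    hpos, ?_, ⟨(θ₁ - θ₀) * ‖G‖, fun c => ?_⟩, fun R c v => ⟨?_, ?_⟩⟩
  · rw [← (hZ 0).sq_eq_two_mul_integral G.continuous hθ.le hFG, Real.sqrt_sq (hpos 0).le]
  · rw [mul_left_comm]
    exact mul_le_mul_of_nonneg_left ((hZ c).speed_mul_le hG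
      (fun s _ => (le_abs_self _).trans (G.norm_coe_le_norm s)) hL) hL.le
  · rintro ⟨θ, hconn⟩
    exact (hZ c).slope_eq hconn hG hFG
  · rintro rfl
    exact (hZ c).exists_isMonotoneConnection G.continuous hθ hFG R

/-! ### The speed curve -/

section SpeedCurve

variable {h ψ : ℝ → ℝ} {a q : ℝ}

theorem exists_orderIso_eq_iff_mul_sub_eq {n : ℕ∞ω} (hn : n ≠ 0) (hh : ContDiff ℝ n h)
    (hanti : Antitone h) (ha : 0 < a) (hq : 0 < q) :
    ∃ ψ : ℝ ≃o ℝ, ContDiff ℝ n ψ ∧ (∀ R, 0 < deriv ψ R) ∧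
      ∀ R c, c = ψ R ↔ c * a - q * R = h c := by
  have hderiv : ∀ c, HasDerivAt (fun c => (c * a - h c) / q) ((a - deriv h c) / q) c := fun c =>
    ((hasDerivAt_mul_const a).fun_sub (hh.differentiable hn c).hasDerivAt).div_const q
  have hle : ∀ c, a / q ≤ (a - deriv h c) / q := fun c => by
    gcongr
    linarith [hanti.deriv_nonpos (x := c)]
  have hpos : ∀ c, 0 < (a - deriv h c) / q := fun c => (div_pos ha hq).trans_le (hle c)
  obtain ⟨e, he⟩ := exists_orderIso_of_le_deriv (div_pos ha hq) hderiv hle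
  rw [← he] at hderiv
  have hsmooth : ContDiff ℝ n e := by
    rw [he]
    exact ((contDiff_id.mul contDiff_const).sub hh).div_const q
  refine ⟨e.symm, e.toHomeomorph.contDiff_symm_deriv (fun c => (hpos c).ne') hderiv hsmooth,
    fun R => ?_, fun R c => ?_⟩
  · rw [(hasDerivAt_orderIso_symm (hderiv _) (hpos _).ne').deriv]
    exact inv_pos.2 (hpos _)
  · rw [e.eq_symm_apply, he, div_eq_iff hq.ne', mul_comm R, sub_eq_iff_eq_add', sub_eq_iff_eq_add]

theorem div_lt_of_mul_sub_eq (ha : 0 < a) (hpos : ∀ c, 0 < h c)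
    (hψ : ∀ R, ψ R * a - q * R = h (ψ R)) (R : ℝ) : q * R / a < ψ R := by
  rw [div_lt_iff₀ ha, ← sub_pos, hψ R]
  exact hpos _

theorem lt_of_mul_sub_eq (ha : 0 < a) (hanti : StrictAnti h)
    (hψ : ∀ R, ψ R * a - q * R = h (ψ R)) {R : ℝ} (hR : 0 < ψ R) :
    ψ R < 1 / a * (h 0 + q * R) := by
  rw [one_div_mul_eq_div, lt_div_iff₀ ha]
  linarith [hψ R, hanti hR]

theorem tendsto_sub_div_of_mul_sub_eq (ha : 0 < a) (hq : 0 < q) (hpos : ∀ c, 0 < h c) {B : ℝ}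
    (hB : ∀ c, c * h c ≤ B) (hψ : ∀ R, ψ R * a - q * R = h (ψ R)) :
    Tendsto (fun R => ψ R - q * R / a) atTop (𝓝 0) := by
  have hlt := div_lt_of_mul_sub_eq ha hpos hψ
  have htop : Tendsto ψ atTop atTop := tendsto_atTop_mono (fun R => (hlt R).le)
    ((tendsto_id.const_mul_atTop hq).atTop_div_const ha)
  have hlim : Tendsto (fun R => B / ψ R / a) atTop (𝓝 0) := by
    simpa using (htop.const_div_atTop B).div_const a
  refine squeeze_zero' (Eventually.of_forall fun R => (sub_pos.2 (hlt R)).le) ?_ hlim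
  filter_upwards [htop.eventually_gt_atTop 0] with R hR
  rw [le_div_iff₀ ha, sub_mul, div_mul_cancel₀ _ ha.ne', hψ R, le_div_iff₀' hR]
  exact hB _

end SpeedCurve

theorem stmt18_general {q θhl θp F' : ℝ} {F : ℝ → ℝ} (hq : 0 < q) (h0 : 0 < θhl) (h1 : θhl < θp)
    (hF : ContinuousOn F (Icc θhl θp)) (hFzero : F θp = 0) (hFpos : ∀ u ∈ Ico θhl θp, 0 < F u)
    (hderiv : HasDerivWithinAt F F' (Icc θhl θp) θp) (hF' : F' < 0) :
    ∃ ψ : ℝ ≃o ℝ, ContDiff ℝ ω ψ ∧ (∀ R, 0 < deriv ψ R) ∧ 0 < ψ 0 ∧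
      (∀ R c, c = ψ R ↔ ∃ θ, IsMonotoneConnection F θhl θp R c (c * θhl - q * R) θ) ∧
      (∀ R, q * R / θhl < ψ R) ∧
      (∀ R, 0 ≤ R → ψ R < (1 / θhl) * (√(2 * ∫ u in θhl..θp, F u) + q * R)) ∧
      Tendsto (fun R => ψ R - q * R / θhl) atTop (𝓝 0) := by
  obtain ⟨h, hsmooth, hanti, hpos, hzero, ⟨B, hB⟩, hconn⟩ :=
    exists_isMonotoneConnection_iff_slope_eq h1 hF hFzero hFpos hderiv hF'
  obtain ⟨ψ, hψsmooth, hψderiv, hψ⟩ :=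
    exists_orderIso_eq_iff_mul_sub_eq (by simp) hsmooth hanti.antitone h0 hq
  have hψeq : ∀ R, ψ R * θhl - q * R = h (ψ R) := fun R => (hψ R _).1 rfl
  have hlt := div_lt_of_mul_sub_eq h0 hpos hψeq
  have hψ0 : 0 < ψ 0 := by simpa using hlt 0
  refine ⟨ψ, hψsmooth, hψderiv, hψ0, fun R c => (hψ R c).trans (hconn R c _).symm, hlt,
    fun R hR => ?_, tendsto_sub_div_of_mul_sub_eq h0 hq hpos hB hψeq⟩
  rw [← hzero]
  exact lt_of_mul_sub_eq h0 hanti hψeq (hψ0.trans_le (ψ.monotone hR))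

/-- The curve `c = ψ(R)` selecting, for each `R ≥ 0`, the unique speed for which
the solution starting at the heat-loss interface with slope `cθ_hl − qR` is the
monotone heteroclinic connection to `θ₊`: `ψ` is smooth, strictly increasing with
positive derivative, maps `[0, ∞)` onto `[ψ(0), ∞)`, satisfies the bounds
`qR/θ_hl < ψ(R) < c₊(R)`, and has the line `c = qR/θ_hl` as asymptote.
(Derivatives on closed half-lines are taken within them.) -/
theorem stmt18 (q θhl θp : ℝ) (hq : 0 < q) (h0 : 0 < θhl) (h1 : θhl < θp)
    (F : ℝ → ℝ) (W : Set ℝ) (hW : IsOpen W) (hWsub : Icc θhl θp ⊆ W)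
    (hF : ContDiffOn ℝ (⊤ : ℕ∞) F W) (hFzero : F θp = 0)
    (hFpos : ∀ u ∈ Ico θhl θp, 0 < F u) (hF' : deriv F θp < 0) :
    ∃ ψ : ℝ → ℝ,
      ContDiffOn ℝ (⊤ : ℕ∞) ψ (Ici 0) ∧
      StrictMonoOn ψ (Ici 0) ∧
      (∀ R ∈ Ici (0 : ℝ), 0 < derivWithin ψ (Ici 0) R) ∧
      0 < ψ 0 ∧
      ψ '' Ici 0 = Ici (ψ 0) ∧
      (∀ R : ℝ, 0 ≤ R → ∀ c : ℝ, 0 < c →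
        (c = ψ R ↔ ∃ θ : ℝ → ℝ,
          ContDiffOn ℝ 2 θ (Ici R) ∧
          (∀ x ∈ Ici R, derivWithin (derivWithin θ (Ici R)) (Ici R) x
              - c * derivWithin θ (Ici R) x + F (θ x) = 0) ∧
          θ R = θhl ∧
          derivWithin θ (Ici R) R = c * θhl - q * R ∧
          (∀ x ∈ Ici R, 0 < derivWithin θ (Ici R) x) ∧
          Tendsto θ atTop (nhds θp))) ∧
      (∀ R : ℝ, 0 ≤ R →
        q * R / θhl < ψ R ∧
        ψ R < (1 / θhl) * (Real.sqrt (2 * ∫ u in θhl..θp, F u) + q * R)) ∧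
      Tendsto (fun R => ψ R - q * R / θhl) atTop (nhds 0) := by
  have hderiv := (differentiableAt_of_deriv_ne_zero hF'.ne).hasDerivAt
  obtain ⟨ψ, hsmooth, hpos, hψ0, hiff, hlower, hupper, hasymp⟩ :=
    stmt18_general hq h0 h1 (hF.continuousOn.mono hWsub) hFzero hFpos hderiv.hasDerivWithinAt hF'
  refine ⟨ψ, (hsmooth.of_le le_top).contDiffOn, ψ.strictMono.strictMonoOn _, fun R hR => ?_, hψ0,
    ψ.image_Ici 0, fun R _ c _ => hiff R c, fun R hR => ⟨hlower R, hupper R hR⟩, hasymp⟩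
  rw [(hsmooth.differentiable (by simp) R).derivWithin (uniqueDiffOn_Ici 0 R hR)]
  exact hpos R
end
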